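/- Let G = K₄ + C₅⁽¹⁾ + C₅⁽²⁾ + C₅⁽³⁾ + C₅⁽⁴⁾ be the join of a complete graph on 4 vertices with four disjoint copies of the 5-cycle. Then G → (3,5), i.e., every blue-red coloring of the edges of G contains either a blue 3-clique or a red 5-clique. -/

import Mathlib

open SimpleGraph

/-- A blue-red coloring of the edges of `G`: a partition `E(G) = E₁ ∪ E₂`,
`E₁ ∩ E₂ = ∅` (edges in `E₁` are blue, edges in `E₂` are red). -/
def IsBRColoring {V : Type*} (G : SimpleGraph V) (E1 E2 : Set (Sym2 V)) : Prop :=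
  E1 ∪ E2 = G.edgeSet ∧ E1 ∩ E2 = ∅

/-- `G` has an `n`-clique all of whose edges lie in the edge set `E`
(a monochromatic `n`-clique in the color `E`). -/
def HasMonoNClique {V : Type*} (G : SimpleGraph V) (E : Set (Sym2 V)) (n : ℕ) : Prop :=
  ∃ S : Finset V, G.IsNClique n S ∧ ∀ x ∈ S, ∀ y ∈ S, x ≠ y → s(x, y) ∈ E

/-- The blue-red coloring `E1, E2` is `(p,q)`-free: there is no blue `p`-clique
and no red `q`-clique. -/
def IsPQFree {V : Type*} (G : SimpleGraph V) (E1 E2 : Set (Sym2 V)) (p q : ℕ) : Prop :=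
  ¬ HasMonoNClique G E1 p ∧ ¬ HasMonoNClique G E2 q

/-- `G → (p,q)` : no blue-red coloring of `E(G)` is `(p,q)`-free. -/
def Arrows {V : Type*} (G : SimpleGraph V) (p q : ℕ) : Prop :=
  ∀ E1 E2 : Set (Sym2 V), IsBRColoring G E1 E2 → ¬ IsPQFree G E1 E2 p q

/-- The neighborhood of `v` in the color `E`: all neighbors `u` of `v`
with `[v,u] ∈ E`.  With `E = E1` this is `N₁(v)`, with `E = E2` it is `N₂(v)`. -/
def colorNbhd {V : Type*} (G : SimpleGraph V) (E : Set (Sym2 V)) (v : V) : Set V :=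
  {u | G.Adj v u ∧ s(v, u) ∈ E}

/-- The join `G + H` of two graphs on disjoint vertex sets: all edges of `G`,
all edges of `H`, and all pairs `[x,y]` with `x ∈ V(G)`, `y ∈ V(H)`. -/
def graphJoin {α β : Type*} (G : SimpleGraph α) (H : SimpleGraph β) :
    SimpleGraph (α ⊕ β) where
  Adj x y :=
    match x, y with
    | .inl a, .inl b => G.Adj a b
    | .inr a, .inr b => H.Adj a b
    | .inl _, .inr _ => True
    | .inr _, .inl _ => True
  symm := by constructor; rintro (a | a) (b | b) <;> simp [SimpleGraph.adj_comm]
  loopless := by constructor; rintro (a | a) <;> simp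

/-- `G` contains a copy of `H` as a subgraph: there is an injective map of the
vertices of `H` into the vertices of `G` sending edges to edges. -/
def ContainsCopy {V W : Type*} (G : SimpleGraph V) (H : SimpleGraph W) : Prop :=
  ∃ f : W ↪ V, ∀ a b : W, H.Adj a b → G.Adj (f a) (f b)

/-- `s` is an independent set of `G`: no two of its vertices are adjacent. -/
def IsIndepSet {V : Type*} (G : SimpleGraph V) (s : Set V) : Prop :=
  ∀ x ∈ s, ∀ y ∈ s, ¬ G.Adj x y

/-- The vertex set of `K₄ + C₅ + C₅ + C₅ + C₅`. -/
abbrev V24 : Type := Fin 4 ⊕ (Fin 5 ⊕ (Fin 5 ⊕ (Fin 5 ⊕ Fin 5)))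

/-- The graph `K₄ + C₅⁽¹⁾ + C₅⁽²⁾ + C₅⁽³⁾ + C₅⁽⁴⁾`. -/
def G24 : SimpleGraph V24 :=
  graphJoin (⊤ : SimpleGraph (Fin 4))
    (graphJoin (cycleGraph 5)
      (graphJoin (cycleGraph 5) (graphJoin (cycleGraph 5) (cycleGraph 5))))

namespace FolkmanProof

/-- `KC G S k m`: the set `S` contains a copy of the join of `K_k` with `m` disjoint 5-cycles. -/
inductive KC {V : Type*} (G : SimpleGraph V) : Set V → ℕ → ℕ → Prop
  | nil (S : Set V) : KC G S 0 0
  | vert {S : Set V} {k m : ℕ} (v : V) (hv : v ∈ S)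
      (h : KC G (S ∩ {y | G.Adj v y}) k m) : KC G S (k + 1) m
  | cyc {S : Set V} {k m : ℕ} (γ : Fin 5 → V) (hS : ∀ i, γ i ∈ S)
      (hγ : ∀ i, G.Adj (γ i) (γ (i + 1)))
      (h : KC G (S ∩ {y | ∀ i, G.Adj (γ i) y}) k m) : KC G S k (m + 1)

section basic
variable {V : Type*} {G H : SimpleGraph V}

theorem KC.mono {S : Set V} {k m : ℕ} (h : KC G S k m) :
    ∀ {T : Set V}, S ⊆ T → KC G T k m := by
  induction h with
  | nil S => intro T _; exact KC.nil T
  | vert v hv _ ih =>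
    intro T hST
    exact KC.vert v (hST hv) (ih (Set.inter_subset_inter_left _ hST))
  | cyc γ hS hγ _ ih =>
    intro T hST
    exact KC.cyc γ (fun i => hST (hS i)) hγ (ih (Set.inter_subset_inter_left _ hST))

theorem KC.change {S : Set V} {k m : ℕ} (h : KC G S k m) :
    (∀ x ∈ S, ∀ y ∈ S, G.Adj x y → H.Adj x y) → KC H S k m := by
  induction h with
  | nil S => intro _; exact KC.nil S
  | @vert S k m v hv _ ih =>
    intro hGH
    refine KC.vert v hv ((ih ?_).mono ?_)
    · intro x hx y hy hxy; exact hGH x hx.1 y hy.1 hxy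
    · intro y hy; exact ⟨hy.1, hGH v hv y hy.1 hy.2⟩
  | @cyc S k m γ hS hγ _ ih =>
    intro hGH
    refine KC.cyc γ hS (fun i => hGH _ (hS _) _ (hS _) (hγ i)) ((ih ?_).mono ?_)
    · intro x hx y hy hxy; exact hGH x hx.1 y hy.1 hxy
    · intro y hy; exact ⟨hy.1, fun i => hGH _ (hS i) y hy.1 (hy.2 i)⟩

theorem KC.join {S : Set V} {k m : ℕ} (h : KC G S k m) :
    ∀ {T : Set V} {k' m' : ℕ}, KC G T k' m' → (∀ x ∈ S, ∀ y ∈ T, G.Adj x y) →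
      KC G (S ∪ T) (k + k') (m + m') := by
  induction h with
  | nil S =>
    intro T k' m' hT _
    rw [Nat.zero_add, Nat.zero_add]
    exact hT.mono Set.subset_union_right
  | @vert S k m v hv _ ih =>
    intro T k' m' hT hST
    rw [Nat.add_right_comm]
    refine KC.vert v (Or.inl hv) ((ih hT (fun x hx => hST x hx.1)).mono ?_)
    rintro y (hy | hy)
    · exact ⟨Or.inl hy.1, hy.2⟩
    · exact ⟨Or.inr hy, hST v hv y hy⟩
  | @cyc S k m γ hS hγ _ ih =>
    intro T k' m' hT hST
    rw [Nat.add_right_comm]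
    refine KC.cyc γ (fun i => Or.inl (hS i)) hγ ((ih hT (fun x hx => hST x hx.1)).mono ?_)
    rintro y (hy | hy)
    · exact ⟨Or.inl hy.1, hy.2⟩
    · exact ⟨Or.inr hy, fun i => hST _ (hS i) y hy⟩

theorem KC.drop {S : Set V} {k' m : ℕ} (h : KC G S k' m) :
    ∀ {k : ℕ}, k ≤ k' → KC G S k m := by
  induction h with
  | nil S => intro k hk; obtain rfl : k = 0 := by omega
             exact KC.nil S
  | @vert S k' m v hv h ih =>
    intro k hk
    rcases k with _ | k
    · exact (ih (Nat.zero_le _)).mono Set.inter_subset_left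
    · exact KC.vert v hv (ih (by omega))
  | @cyc S k' m γ hS hγ _ ih =>
    intro k hk
    exact KC.cyc γ hS hγ (ih hk)

theorem KC.trade {S : Set V} {k m' : ℕ} (h : KC G S k m') :
    ∀ {m : ℕ}, m' = m + 1 → KC G S (k + 2) m := by
  induction h with
  | nil S => intro m hm; omega
  | @vert S k' m v hv h ih =>
    intro m hm
    exact KC.vert v hv (ih hm)
  | @cyc S k' m γ hS hγ h ih =>
    intro n hn
    obtain rfl : m = n := by omega
    refine KC.vert (γ 0) (hS 0) (KC.vert (γ 1) ⟨hS 1, hγ 0⟩ (h.mono ?_))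
    intro y hy
    exact ⟨⟨hy.1, hy.2 0⟩, hy.2 1⟩

/-- An explicit copy of `K_k` joined with `m` five-cycles. -/
structure Cfg (G : SimpleGraph V) (S : Set V) {k m : ℕ} (κ : Fin k → V)
    (γ : Fin m → Fin 5 → V) : Prop where
  kS : ∀ i, κ i ∈ S
  cS : ∀ j l, γ j l ∈ S
  kk : ∀ i j, i ≠ j → G.Adj (κ i) (κ j)
  kc : ∀ i j l, G.Adj (κ i) (γ j l)
  cc : ∀ i j, i ≠ j → ∀ l l', G.Adj (γ i l) (γ j l')
  c : ∀ j l, G.Adj (γ j l) (γ j (l + 1))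

theorem KC.exists_cfg {S : Set V} {k m : ℕ} (h : KC G S k m) :
    ∃ (κ : Fin k → V) (γ : Fin m → Fin 5 → V), Cfg G S κ γ := by
  induction h with
  | nil S =>
    exact ⟨Fin.elim0, Fin.elim0, ⟨fun i => i.elim0, fun i => i.elim0, fun i => i.elim0,
      fun i => i.elim0, fun i => i.elim0, fun i => i.elim0⟩⟩
  | @vert S k m v hv h ih =>
    obtain ⟨κ, γ, hc⟩ := ih
    refine ⟨Fin.cons v κ, γ, ⟨?_, fun j l => (hc.cS j l).1, ?_, ?_, hc.cc, hc.c⟩⟩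
    · intro i
      refine Fin.cases ?_ (fun i => ?_) i
      · exact hv
      · exact (hc.kS i).1
    · intro i j
      refine Fin.cases ?_ (fun i => ?_) i <;> refine Fin.cases ?_ (fun j => ?_) j
      · intro h; exact absurd rfl h
      · intro _; exact (hc.kS j).2
      · intro _; exact (hc.kS i).2.symm
      · intro h; exact hc.kk i j (fun e => h (by rw [e]))
    · intro i
      refine Fin.cases ?_ (fun i => ?_) i
      · intro j l; exact (hc.cS j l).2
      · exact hc.kc i
  | @cyc S k m δ hS hδ h ih =>
    obtain ⟨κ, γ, hc⟩ := ih
    refine ⟨κ, Fin.cons δ γ, ⟨fun i => (hc.kS i).1, ?_, hc.kk, ?_, ?_, ?_⟩⟩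
    · intro i
      refine Fin.cases ?_ (fun i => ?_) i
      · exact hS
      · exact fun l => (hc.cS i l).1
    · intro i j
      refine Fin.cases ?_ (fun j => ?_) j
      · intro l; exact ((hc.kS i).2 l).symm
      · exact hc.kc i j
    · intro i j
      refine Fin.cases ?_ (fun i => ?_) i <;> refine Fin.cases ?_ (fun j => ?_) j
      · intro h; exact absurd rfl h
      · intro _ l l'; exact (hc.cS j l').2 l
      · intro _ l l'; exact ((hc.cS i l).2 l').symm
      · intro h; exact hc.cc i j (fun e => h (by rw [e]))
    · intro j
      refine Fin.cases ?_ (fun j => ?_) j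
      · exact hδ
      · exact hc.c j

/-- Joining a finite family. -/
theorem KC.family {ι : Type*} [DecidableEq ι] (s : Finset ι) (T : ι → Set V) (a z : ι → ℕ)
    (h : ∀ i ∈ s, KC G (T i) (a i) (z i))
    (hT : ∀ i ∈ s, ∀ j ∈ s, i ≠ j → ∀ x ∈ T i, ∀ y ∈ T j, G.Adj x y) :
    KC G (⋃ i ∈ s, T i) (∑ i ∈ s, a i) (∑ i ∈ s, z i) := by
  induction s using Finset.induction_on with
  | empty => exact KC.nil _
  | insert i s hi ih =>
    rw [Finset.sum_insert hi, Finset.sum_insert hi, Finset.set_biUnion_insert]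
    refine (h i (Finset.mem_insert_self _ _)).join (ih ?_ ?_) ?_
    · exact fun j hj => h j (Finset.mem_insert_of_mem hj)
    · exact fun j hj l hl => hT j (Finset.mem_insert_of_mem hj) l (Finset.mem_insert_of_mem hl)
    · intro x hx y hy
      simp only [Set.mem_iUnion] at hy
      obtain ⟨j, hj, hy⟩ := hy
      exact hT i (Finset.mem_insert_self _ _) j (Finset.mem_insert_of_mem hj)
        (fun e => hi (e ▸ hj)) x hx y hy

theorem KC.one {S : Set V} {v : V} (hv : v ∈ S) : KC G S 1 0 := KC.vert v hv (KC.nil _)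

theorem KC.two {S : Set V} {v w : V} (hv : v ∈ S) (hw : w ∈ S) (h : G.Adj v w) : KC G S 2 0 :=
  KC.vert v hv (KC.one ⟨hw, h⟩)

theorem KC.build {S T : Set V} {k m : ℕ} {κ : Fin k → V} {γ : Fin m → Fin 5 → V}
    (hc : Cfg G S κ γ) (s : Finset (Fin k)) (hs : ∀ i ∈ s, κ i ∈ T) (a z : Fin m → ℕ)
    (hz : ∀ j, KC G (T ∩ Set.range (γ j)) (a j) (z j)) :
    KC G T (s.card + ∑ j, a j) (∑ j, z j) := by
  have h1 := KC.family (G := G) s (fun i => {κ i}) (fun _ => 1) (fun _ => 0)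
    (fun i _ => KC.one rfl) (by
      rintro i - j - hij x rfl y rfl
      exact hc.kk i j hij)
  have h2 := KC.family (G := G) Finset.univ (fun j => T ∩ Set.range (γ j)) a z
    (fun j _ => hz j) (by
      rintro i - j - hij x ⟨-, l, rfl⟩ y ⟨-, l', rfl⟩
      exact hc.cc i j hij l l')
  have h3 := h1.join h2 (by
    intro x hx y hy
    simp only [Set.mem_iUnion] at hx hy
    obtain ⟨i, -, rfl⟩ := hx
    obtain ⟨j, -, -, l, rfl⟩ := hy
    exact hc.kc i j l)
  simp only [Finset.sum_const, smul_eq_mul, mul_one, mul_zero, Nat.zero_add] at h3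
  refine h3.mono ?_
  rintro x (hx | hx)
  · simp only [Set.mem_iUnion] at hx
    obtain ⟨i, hi, rfl⟩ := hx
    exact hs i hi
  · simp only [Set.mem_iUnion] at hx
    obtain ⟨j, -, hx⟩ := hx
    exact hx.1

end basic

/-- Type of a five-cycle relative to two classes of vertices. -/
def HasType (p q : Fin 5 → Prop) (t : Fin 4) : Prop :=
  (t = 0 ∧ ∀ l, q l) ∨
  (t = 1 ∧ ∃ l, p l ∧ ((q (l + 1) ∧ q (l + 2)) ∨ (q (l + 4) ∧ q (l + 3)))) ∨
  (t = 2 ∧ (∃ l, p l ∧ p (l + 1)) ∧ ∃ l, q l) ∨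
  (t = 3 ∧ ∀ l, p l)

theorem exists_type_bool : ∀ x0 x1 x2 x3 x4 : Bool, ∃ t : Fin 4,
    (t = 0 ∧ ∀ l, ![x0, x1, x2, x3, x4] l = false) ∨
    (t = 1 ∧ ∃ l, ![x0, x1, x2, x3, x4] l = true ∧
      ((![x0, x1, x2, x3, x4] (l + 1) = false ∧ ![x0, x1, x2, x3, x4] (l + 2) = false) ∨
       (![x0, x1, x2, x3, x4] (l + 4) = false ∧ ![x0, x1, x2, x3, x4] (l + 3) = false))) ∨
    (t = 2 ∧ (∃ l, ![x0, x1, x2, x3, x4] l = true ∧ ![x0, x1, x2, x3, x4] (l + 1) = true) ∧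
      ∃ l, ![x0, x1, x2, x3, x4] l = false) ∨
    (t = 3 ∧ ∀ l, ![x0, x1, x2, x3, x4] l = true) := by
  decide +kernel

theorem exists_type (p q : Fin 5 → Prop) (h : ∀ l, p l ∨ q l) : ∃ t, HasType p q t := by
  classical
  obtain ⟨t, ht⟩ := exists_type_bool (decide (p 0)) (decide (p 1)) (decide (p 2)) (decide (p 3))
    (decide (p 4))
  have e : ![decide (p 0), decide (p 1), decide (p 2), decide (p 3), decide (p 4)]
      = fun l => decide (p l) := by
    funext l; fin_cases l <;> rfl
  rw [e] at ht
  have hq : ∀ l, ¬ p l → q l := fun l hl => (h l).resolve_left hl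
  simp only [decide_eq_true_eq, decide_eq_false_iff_not] at ht
  refine ⟨t, ?_⟩
  rcases ht with ⟨h0, h1⟩ | ⟨h0, l, h1, h2⟩ | ⟨h0, h1, l, h2⟩ | ⟨h0, h1⟩
  · exact Or.inl ⟨h0, fun l => hq l (h1 l)⟩
  · refine Or.inr (Or.inl ⟨h0, l, h1, ?_⟩)
    rcases h2 with ⟨h2, h3⟩ | ⟨h2, h3⟩
    · exact Or.inl ⟨hq _ h2, hq _ h3⟩
    · exact Or.inr ⟨hq _ h2, hq _ h3⟩
  · exact Or.inr (Or.inr (Or.inl ⟨h0, h1, l, hq _ h2⟩))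
  · exact Or.inr (Or.inr (Or.inr ⟨h0, h1⟩))

/-- clique number contributed to the blue neighbourhood -/
def tA : Fin 4 → ℕ := ![0, 1, 2, 2]
/-- clique number contributed to the red neighbourhood -/
def tB : Fin 4 → ℕ := ![0, 2, 1, 0]
/-- number of full cycles contributed to the red neighbourhood -/
def tZ : Fin 4 → ℕ := ![1, 0, 0, 0]

/-- Every coloured `K_k + m C_5` contains a red `q`-clique. -/
def Arr {V : Type*} (B R : SimpleGraph V) (q k m : ℕ) : Prop :=
  ∀ S : Set V, KC (B ⊔ R) S k m → KC R S q 0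

section step
variable {V : Type*} {B R : SimpleGraph V}

theorem step (tf : ∀ x y z, B.Adj x y → B.Adj y z → B.Adj x z → False)
    {S : Set V} {k m q : ℕ} {κ : Fin k → V} {γ : Fin m → Fin 5 → V}
    (hc : Cfg (B ⊔ R) S κ γ) (hfree : ¬ KC R S (q + 1) 0) (i : Fin k) :
    ∃ (sA sB : Finset (Fin k)) (τ : Fin m → Fin 4),
      (∀ j, j ∈ sA ↔ B.Adj (κ i) (κ j)) ∧
      (∀ j, j ∈ sB → R.Adj (κ i) (κ j)) ∧
      sA.card + sB.card + 1 = k ∧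
      (∀ j, HasType (fun l => B.Adj (κ i) (γ j l)) (fun l => R.Adj (κ i) (γ j l)) (τ j)) ∧
      sA.card + ∑ j, tA (τ j) ≤ q ∧
      ¬ KC R (S ∩ {y | R.Adj (κ i) y}) q 0 ∧
      KC (B ⊔ R) (S ∩ {y | R.Adj (κ i) y}) (sB.card + ∑ j, tB (τ j)) (∑ j, tZ (τ j)) := by
  classical
  set sA : Finset (Fin k) := Finset.univ.filter (fun j => B.Adj (κ i) (κ j)) with hsA
  have hτ : ∀ j, ∃ t, HasType (fun l => B.Adj (κ i) (γ j l)) (fun l => R.Adj (κ i) (γ j l)) t :=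
    fun j => exists_type _ _ (fun l => hc.kc i j l)
  choose τ hτ using hτ
  have hiA : i ∉ sA := by simp [hsA]
  have hred : ∀ j ∈ (Finset.univ \ sA).erase i, R.Adj (κ i) (κ j) := by
    intro j hj
    simp only [hsA, Finset.mem_erase, Finset.mem_sdiff, Finset.mem_univ, true_and,
      Finset.mem_filter] at hj
    exact (hc.kk i j (Ne.symm hj.1)).resolve_left hj.2
  refine ⟨sA, (Finset.univ \ sA).erase i, τ, by simp [hsA], hred, ?_, hτ, ?_, ?_, ?_⟩
  · rw [Finset.card_erase_of_mem (by simp [hiA])]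
    have h1 : (Finset.univ \ sA).card = k - sA.card := by
      rw [Finset.card_sdiff_of_subset (Finset.subset_univ _)]; simp
    have h2 : sA.card < k := by
      have := Finset.card_lt_univ_of_notMem hiA
      simpa using this
    omega
  · by_contra hlt
    push Not at hlt
    have hK : KC (B ⊔ R) (S ∩ {y | B.Adj (κ i) y}) (sA.card + ∑ j, tA (τ j)) (∑ j : Fin m, 0) := by
      refine KC.build hc sA ?_ _ _ ?_
      · intro j hj
        simp only [hsA, Finset.mem_filter, Finset.mem_univ, true_and] at hj
        exact ⟨hc.kS j, hj⟩
      · intro j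
        rcases hτ j with ⟨h0, h1⟩ | ⟨h0, l, h1, h2⟩ | ⟨h0, ⟨l, h1, h1'⟩, h2⟩ | ⟨h0, h1⟩ <;> rw [h0]
        · exact KC.nil _
        · exact KC.one (v := γ j l) ⟨⟨hc.cS j l, h1⟩, l, rfl⟩
        · exact KC.two (v := γ j l) (w := γ j (l + 1)) ⟨⟨hc.cS j _, h1⟩, _, rfl⟩
            ⟨⟨hc.cS j _, h1'⟩, _, rfl⟩ (hc.c j l)
        · exact KC.two (v := γ j 0) (w := γ j (0 + 1)) ⟨⟨hc.cS j _, h1 _⟩, _, rfl⟩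
            ⟨⟨hc.cS j _, h1 _⟩, _, rfl⟩ (hc.c j 0)
    simp only [Finset.sum_const_zero] at hK
    have hR : KC R (S ∩ {y | B.Adj (κ i) y}) (sA.card + ∑ j, tA (τ j)) 0 :=
      hK.change (by
        intro x hx y hy hxy
        rcases hxy with h | h
        · exact (tf _ _ _ hx.2 h hy.2).elim
        · exact h)
    exact hfree ((hR.drop hlt).mono Set.inter_subset_left)
  · intro h
    exact hfree (KC.vert (κ i) (hc.kS i) h)
  · refine KC.build hc _ ?_ _ _ ?_
    · intro j hj
      exact ⟨hc.kS j, hred j hj⟩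
    · intro j
      rcases hτ j with ⟨h0, h1⟩ | ⟨h0, l, h1, h2⟩ | ⟨h0, h1, ⟨l, h2⟩⟩ | ⟨h0, h1⟩ <;> rw [h0]
      · exact KC.cyc (γ j) (fun l => ⟨⟨hc.cS j l, h1 l⟩, l, rfl⟩) (hc.c j) (KC.nil _)
      · rcases h2 with ⟨h2, h3⟩ | ⟨h2, h3⟩
        · have := hc.c j (l + 1)
          rw [add_assoc] at this
          exact KC.two (v := γ j (l + 1)) (w := γ j (l + 2)) ⟨⟨hc.cS j _, h2⟩, _, rfl⟩
            ⟨⟨hc.cS j _, h3⟩, _, rfl⟩ this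
        · have := hc.c j (l + 3)
          rw [add_assoc] at this
          exact KC.two (v := γ j (l + 3)) (w := γ j (l + 4)) ⟨⟨hc.cS j _, h3⟩, _, rfl⟩
            ⟨⟨hc.cS j _, h2⟩, _, rfl⟩ this
      · exact KC.one (v := γ j l) ⟨⟨hc.cS j l, h2⟩, l, rfl⟩
      · exact KC.nil _

theorem Arr.mono {q k m : ℕ} (h : Arr B R q k m) {k' : ℕ} (hk : k ≤ k') : Arr B R q k' m :=
  fun S hS => h S (hS.drop hk)

theorem Arr.up {q k m : ℕ} (h : Arr B R q (k + 2) m) : Arr B R q k (m + 1) :=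
  fun S hS => h S (hS.trade rfl)

end step

section small
variable {V : Type*} {B R : SimpleGraph V}

theorem arr_2_3_0 (tf : ∀ x y z, B.Adj x y → B.Adj y z → B.Adj x z → False) :
    Arr B R 2 3 0 := by
  intro S h
  obtain ⟨κ, γ, hc⟩ := h.exists_cfg
  by_contra hfree
  have hb : ∀ i j, i ≠ j → B.Adj (κ i) (κ j) := fun i j hij =>
    (hc.kk i j hij).resolve_right (fun hr => hfree (KC.two (hc.kS i) (hc.kS j) hr))
  exact tf _ _ _ (hb 0 1 (by decide)) (hb 1 2 (by decide)) (hb 0 2 (by decide))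

theorem arr_3_6_0 (tf : ∀ x y z, B.Adj x y → B.Adj y z → B.Adj x z → False) :
    Arr B R 3 6 0 := by
  intro S h
  obtain ⟨κ, γ, hc⟩ := h.exists_cfg
  by_contra hfree
  obtain ⟨sA, sB, τ, -, -, hcard, -, hA, hBfree, hB⟩ := step tf hc hfree 0
  simp only [Finset.univ_eq_empty, Finset.sum_empty, add_zero] at hA hB
  exact hBfree ((arr_2_3_0 tf).mono (by omega : 3 ≤ sB.card) _ hB)

theorem not_exc_3 : ∀ (t : Fin 4) (a b : ℕ), a + b + 1 = 3 → a + tA t ≤ 2 →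
    ¬ (tZ t = 0 ∧ 3 ≤ b + tB t) → ¬ (tZ t = 1 ∧ 1 ≤ b + tB t) → a = 0 ∨ a = 2 := by
  intro t a b
  fin_cases t <;> simp [tA, tB, tZ] <;> omega

theorem arr_3_3_1 (tf : ∀ x y z, B.Adj x y → B.Adj y z → B.Adj x z → False) :
    Arr B R 3 3 1 := by
  intro S h
  obtain ⟨κ, γ, hc⟩ := h.exists_cfg
  by_contra hfree
  have key : ∀ i j l : Fin 3, i ≠ j → i ≠ l → B.Adj (κ i) (κ j) → B.Adj (κ i) (κ l) := by
    intro i j l hij hil hj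
    obtain ⟨sA, sB, τ, hsA, -, hcard, -, hA, hBfree, hB⟩ := step tf hc hfree i
    simp only [Fin.sum_univ_one] at hA hB
    have h02 := not_exc_3 (τ 0) _ _ hcard hA
      (fun h => hBfree ((arr_2_3_0 tf).mono h.2 _ (by rw [h.1] at hB; exact hB)))
      (fun h => hBfree ((Arr.up (arr_2_3_0 tf)).mono h.2 _ (by rw [h.1] at hB; exact hB)))
    have hjA := (hsA j).2 hj
    have hne : sA.card ≠ 0 := Finset.card_ne_zero_of_mem hjA
    have h2 : sA.card = 2 := by omega
    by_contra hl
    have hsub : sA ⊆ {j} := by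
      intro x hx
      have hx' := (hsA x).1 hx
      have h1 : x ≠ i := by rintro rfl; exact B.irrefl hx'
      have h2 : x ≠ l := by rintro rfl; exact hl hx'
      have h3 : j ≠ l := by rintro rfl; exact hl hj
      rw [Finset.mem_singleton]
      omega
    have := Finset.card_le_card hsub
    simp at this
    omega
  by_cases h01 : B.Adj (κ 0) (κ 1)
  · have h02 := key 0 1 2 (by decide) (by decide) h01
    have h12 := key 1 0 2 (by decide) (by decide) h01.symm
    exact tf _ _ _ h01 h12 h02
  · have h02 : ¬ B.Adj (κ 0) (κ 2) := fun h => h01 (key 0 2 1 (by decide) (by decide) h)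
    have h12 : ¬ B.Adj (κ 1) (κ 2) := fun h => h01 (key 1 2 0 (by decide) (by decide) h).symm
    have r01 := (hc.kk 0 1 (by decide)).resolve_left h01
    have r02 := (hc.kk 0 2 (by decide)).resolve_left h02
    have r12 := (hc.kk 1 2 (by decide)).resolve_left h12
    exact hfree (KC.vert (κ 0) (hc.kS 0) (KC.two (v := κ 1) (w := κ 2)
      ⟨hc.kS 1, r01⟩ ⟨hc.kS 2, r02⟩ r12))

theorem arr_4_9_0 (tf : ∀ x y z, B.Adj x y → B.Adj y z → B.Adj x z → False) :
    Arr B R 4 9 0 := by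
  classical
  intro S h
  obtain ⟨κ, γ, hc⟩ := h.exists_cfg
  by_contra hfree
  let H : SimpleGraph (Fin 9) := B.comap κ
  have hdeg : ∀ i, H.degree i = 3 := by
    intro i
    obtain ⟨sA, sB, τ, hsA, -, hcard, -, hA, hBfree, hB⟩ := step tf hc hfree i
    simp only [Finset.univ_eq_empty, Finset.sum_empty, add_zero] at hA hB
    have h5 : ¬ 6 ≤ sB.card := fun h6 => hBfree ((arr_3_6_0 tf).mono h6 _ hB)
    have : H.neighborFinset i = sA := by
      ext j
      rw [mem_neighborFinset, hsA]
      rfl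
    rw [← card_neighborFinset_eq_degree, this]
    omega
  have hsum := H.sum_degrees_eq_twice_card_edges
  simp only [hdeg] at hsum
  simp at hsum
  omega

/-- No red `K_4`, stated explicitly. -/
theorem red4 {S : Set V} (hfree : ¬ KC R S 4 0) {x y z w : V} (hx : x ∈ S) (hy : y ∈ S)
    (hz : z ∈ S) (hw : w ∈ S) (xy : R.Adj x y) (xz : R.Adj x z) (xw : R.Adj x w)
    (yz : R.Adj y z) (yw : R.Adj y w) (zw : R.Adj z w) : False :=
  hfree (KC.vert x hx (KC.vert y ⟨hy, xy⟩ (KC.two (v := z) (w := w)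
    ⟨⟨hz, xz⟩, yz⟩ ⟨⟨hw, xw⟩, yw⟩ zw)))

theorem not_exc_42 : ∀ (t u : Fin 4) (a b : ℕ), a + b + 1 = 4 → a + (tA t + tA u) ≤ 3 →
    ¬ (tZ t + tZ u = 0 ∧ 6 ≤ b + (tB t + tB u)) → ¬ (tZ t + tZ u = 1 ∧ 3 ≤ b + (tB t + tB u)) →
    ¬ (tZ t + tZ u = 2 ∧ 1 ≤ b + (tB t + tB u)) →
    (a = 3) ∨ (a = 1 ∧ (t = 3 ∧ u = 0 ∨ t = 0 ∧ u = 3)) ∨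
      (a = 0 ∧ (t = 3 ∧ u = 1 ∨ t = 1 ∧ u = 3)) := by
  intro t u a b
  fin_cases t <;> fin_cases u <;> simp [tA, tB, tZ] <;> omega

/-- Symmetric Boolean matrix. -/
def bM (b01 b02 b03 b12 b13 b23 : Bool) : Fin 4 → Fin 4 → Bool :=
  ![![false, b01, b02, b03], ![b01, false, b12, b13],
      ![b02, b12, false, b23], ![b03, b13, b23, false]]

/-- Row sums. -/
def dM (β : Fin 4 → Fin 4 → Bool) (i : Fin 4) : ℕ :=
  (β i 0).toNat + (β i 1).toNat + (β i 2).toNat + (β i 3).toNat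

/-- First hypothesis on the distinguished cycles. -/
def hypJ1 (β : Fin 4 → Fin 4 → Bool) (J : Fin 4 → Bool) : Prop :=
    ∀ i i', β i i' = true ∧ dM β i = 1 ∧ dM β i' = 1 → J i ≠ J i'

/-- Second hypothesis on the distinguished cycles. -/
def hypJ2 (β : Fin 4 → Fin 4 → Bool) (J : Fin 4 → Bool) : Prop :=
    ∀ i i' i'', i ≠ i' ∧ β i i' = false ∧ dM β i = 1 ∧ dM β i' ≠ 3 ∧ dM β i'' ≠ 3 ∧ J i = J i' →
      J i'' = J i

/-- Third hypothesis on the distinguished cycles. -/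
def hypJ3 (β : Fin 4 → Fin 4 → Bool) (J : Fin 4 → Bool) : Prop :=
    ∀ i i' i'', i ≠ i' ∧ i ≠ i'' ∧ i' ≠ i'' ∧ β i i' = false ∧ β i i'' = false ∧
      β i' i'' = false ∧ dM β i = 1 ∧ dM β i' = 1 ∧ dM β i'' = 1 ∧ J i = J i' → J i ≠ J i''

instance (β : Fin 4 → Fin 4 → Bool) (J : Fin 4 → Bool) : Decidable (hypJ1 β J) := by
  unfold hypJ1; infer_instance

instance (β : Fin 4 → Fin 4 → Bool) (J : Fin 4 → Bool) : Decidable (hypJ2 β J) := by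
  unfold hypJ2; infer_instance

instance (β : Fin 4 → Fin 4 → Bool) (J : Fin 4 → Bool) : Decidable (hypJ3 β J) := by
  unfold hypJ3; infer_instance

/-- The finite combinatorial core of `K_4 + C_5 + C_5 → (3,4)`. -/
theorem core_42_aux : ∀ b01 b02 b03 b12 b13 b23 : Bool,
    (∀ i, dM (bM b01 b02 b03 b12 b13 b23) i = 0 ∨ dM (bM b01 b02 b03 b12 b13 b23) i = 1 ∨
      dM (bM b01 b02 b03 b12 b13 b23) i = 3) →
    (∃ i j, bM b01 b02 b03 b12 b13 b23 i j = true) → ¬ (b01 = true ∧ b12 = true ∧ b02 = true) →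
    ∀ j0 j1 j2 j3 : Bool, ¬ (hypJ1 (bM b01 b02 b03 b12 b13 b23) ![j0, j1, j2, j3] ∧
      hypJ2 (bM b01 b02 b03 b12 b13 b23) ![j0, j1, j2, j3] ∧
      hypJ3 (bM b01 b02 b03 b12 b13 b23) ![j0, j1, j2, j3]) := by
  decide +kernel

theorem core_42 (β : Fin 4 → Fin 4 → Bool) (J : Fin 4 → Bool) (hs : ∀ i j, β i j = β j i)
    (hi : ∀ i, β i i = false) (hd : ∀ i, dM β i = 0 ∨ dM β i = 1 ∨ dM β i = 3)
    (he : ∃ i j, β i j = true) (ht : ¬ (β 0 1 = true ∧ β 1 2 = true ∧ β 0 2 = true))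
    (hJ : hypJ1 β J ∧ hypJ2 β J ∧ hypJ3 β J) : False := by
  have e : β = bM (β 0 1) (β 0 2) (β 0 3) (β 1 2) (β 1 3) (β 2 3) := by
    funext i j
    fin_cases i <;> fin_cases j <;> first | exact hi _ | exact hs _ _ | rfl
  have e' : J = ![J 0, J 1, J 2, J 3] := by
    funext i
    fin_cases i <;> rfl
  rw [e'] at hJ
  generalize β 0 1 = x1, β 0 2 = x2, β 0 3 = x3, β 1 2 = x4, β 1 3 = x5, β 2 3 = x6 at e ht
  subst e
  exact core_42_aux _ _ _ _ _ _ hd he ht _ _ _ _ hJ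

theorem arr_4_4_2 (tf : ∀ x y z, B.Adj x y → B.Adj y z → B.Adj x z → False) :
    Arr B R 4 4 2 := by
  classical
  intro S h
  obtain ⟨κ, γ, hc⟩ := h.exists_cfg
  by_contra hfree
  let β : Fin 4 → Fin 4 → Bool := fun i j => decide (B.Adj (κ i) (κ j))
  have hβ : ∀ i j, β i j = true ↔ B.Adj (κ i) (κ j) := fun i j => by simp [β]
  have hβf : ∀ i j, β i j = false ↔ ¬ B.Adj (κ i) (κ j) := fun i j => by simp [β]
  have hdcard : ∀ (i : Fin 4) (s : Finset (Fin 4)), (∀ j, j ∈ s ↔ B.Adj (κ i) (κ j)) →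
      dM β i = s.card := by
    intro i s hs
    have : s.card = ∑ j, (β i j).toNat := by
      rw [Finset.card_eq_sum_ones, ← Finset.sum_filter_add_sum_filter_not Finset.univ (· ∈ s)]
      rw [Finset.sum_eq_zero (s := Finset.univ.filter (fun x => ¬ x ∈ s))]
      · rw [add_zero, Finset.filter_univ_mem]
        refine Finset.sum_congr rfl (fun j hj => ?_)
        rw [(hβ i j).2 ((hs j).1 hj)]; rfl
      · intro j hj
        have : j ∉ s := (Finset.mem_filter.1 hj).2
        rw [(hβf i j).2 (fun h => this ((hs j).2 h))]; rfl
    rw [this, Fin.sum_univ_four]; rfl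
  -- information at each vertex; `o` is the cycle that is not entirely blue
  have info : ∀ i, dM β i = 3 ∨ ∃ J : Bool, ∃ j o : Fin 2,
      (J = true ∧ j = 1 ∧ o = 0 ∨ J = false ∧ j = 0 ∧ o = 1) ∧ (∀ l, B.Adj (κ i) (γ j l)) ∧
      ((dM β i = 1 ∧ ∀ l, R.Adj (κ i) (γ o l)) ∨
       (dM β i = 0 ∧ ∃ l, R.Adj (κ i) (γ o l) ∧ R.Adj (κ i) (γ o (l + 1)))) := by
    intro i
    obtain ⟨sA, sB, τ, hsA, -, hcard, hτ, hA, hBfree, hB⟩ := step tf hc hfree i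
    simp only [Fin.sum_univ_two] at hA hB
    rw [hdcard i sA hsA]
    have hT1 : ∀ o, τ o = 1 → ∃ l, R.Adj (κ i) (γ o l) ∧ R.Adj (κ i) (γ o (l + 1)) := by
      intro o ho
      rcases hτ o with ⟨h0, h1⟩ | ⟨h0, l, h1, h2⟩ | ⟨h0, h1, ⟨l, h2⟩⟩ | ⟨h0, h1⟩
      · rw [ho] at h0; exact absurd h0 (by decide)
      · rcases h2 with ⟨h2, h3⟩ | ⟨h2, h3⟩
        · exact ⟨l + 1, h2, by rw [add_assoc]; exact h3⟩
        · exact ⟨l + 3, h3, by rw [add_assoc]; exact h2⟩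
      · rw [ho] at h0; exact absurd h0 (by decide)
      · rw [ho] at h0; exact absurd h0 (by decide)
    have hT0 : ∀ o, τ o = 0 → ∀ l, R.Adj (κ i) (γ o l) := by
      intro o ho
      rcases hτ o with ⟨h0, h1⟩ | ⟨h0, _⟩ | ⟨h0, _⟩ | ⟨h0, h1⟩
      · exact h1
      all_goals rw [ho] at h0; exact absurd h0 (by decide)
    have hT3 : ∀ o, τ o = 3 → ∀ l, B.Adj (κ i) (γ o l) := by
      intro o ho
      rcases hτ o with ⟨h0, h1⟩ | ⟨h0, _⟩ | ⟨h0, _⟩ | ⟨h0, h1⟩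
      · rw [ho] at h0; exact absurd h0 (by decide)
      · rw [ho] at h0; exact absurd h0 (by decide)
      · rw [ho] at h0; exact absurd h0 (by decide)
      · exact h1
    rcases not_exc_42 (τ 0) (τ 1) _ _ hcard hA
      (fun h => hBfree ((arr_3_6_0 tf).mono h.2 _ (by rw [h.1] at hB; exact hB)))
      (fun h => hBfree ((arr_3_3_1 tf).mono h.2 _ (by rw [h.1] at hB; exact hB)))
      (fun h => hBfree ((Arr.up (arr_3_3_1 tf)).mono h.2 _ (by rw [h.1] at hB; exact hB)))
      with h3 | ⟨h1, ⟨ht, hu⟩ | ⟨ht, hu⟩⟩ | ⟨h0, ⟨ht, hu⟩ | ⟨ht, hu⟩⟩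
    · exact Or.inl h3
    · exact Or.inr ⟨false, 0, 1, Or.inr ⟨rfl, rfl, rfl⟩, hT3 0 ht, Or.inl ⟨h1, hT0 1 hu⟩⟩
    · exact Or.inr ⟨true, 1, 0, Or.inl ⟨rfl, rfl, rfl⟩, hT3 1 hu, Or.inl ⟨h1, hT0 0 ht⟩⟩
    · exact Or.inr ⟨false, 0, 1, Or.inr ⟨rfl, rfl, rfl⟩, hT3 0 ht, Or.inr ⟨h0, hT1 1 hu⟩⟩
    · exact Or.inr ⟨true, 1, 0, Or.inl ⟨rfl, rfl, rfl⟩, hT3 1 hu, Or.inr ⟨h0, hT1 0 ht⟩⟩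
  have info' : ∀ i, ∃ J : Bool, ∃ j o : Fin 2, dM β i = 3 ∨
      ((J = true ∧ j = 1 ∧ o = 0 ∨ J = false ∧ j = 0 ∧ o = 1) ∧ (∀ l, B.Adj (κ i) (γ j l)) ∧
      ((dM β i = 1 ∧ ∀ l, R.Adj (κ i) (γ o l)) ∨
       (dM β i = 0 ∧ ∃ l, R.Adj (κ i) (γ o l) ∧ R.Adj (κ i) (γ o (l + 1))))) := by
    intro i
    rcases info i with h | ⟨J, j, o, h⟩
    · exact ⟨true, 0, 0, Or.inl h⟩
    · exact ⟨J, j, o, Or.inr h⟩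
  choose J j o hJ using info'
  have hjJ : ∀ i i', dM β i ≠ 3 → dM β i' ≠ 3 → J i = J i' → j i = j i' ∧ o i = o i' := by
    intro i i' h h' e
    have h1 := ((hJ i).resolve_left h).1
    have h2 := ((hJ i').resolve_left h').1
    rcases h1 with ⟨a, b, c⟩ | ⟨a, b, c⟩ <;> rcases h2 with ⟨a', b', c'⟩ | ⟨a', b', c'⟩ <;>
      simp_all
  have hjJ' : ∀ i i', dM β i ≠ 3 → dM β i' ≠ 3 → J i ≠ J i' → j i = o i' := by
    intro i i' h h' e
    have h1 := ((hJ i).resolve_left h).1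
    have h2 := ((hJ i').resolve_left h').1
    rcases h1 with ⟨a, b, c⟩ | ⟨a, b, c⟩ <;> rcases h2 with ⟨a', b', c'⟩ | ⟨a', b', c'⟩ <;>
      simp_all
  have hred : ∀ i i', i ≠ i' → β i i' = false → R.Adj (κ i) (κ i') := fun i i' h hb =>
    (hc.kk i i' h).resolve_left ((hβf i i').1 hb)
  refine core_42 β J ?_ ?_ ?_ ?_ (fun h => tf _ _ _ ((hβ _ _).1 h.1) ((hβ _ _).1 h.2.1)
    ((hβ _ _).1 h.2.2)) ⟨?_, ?_, ?_⟩
  · intro i j; simp only [β, adj_comm]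
  · intro i; simp [β]
  · intro i
    rcases hJ i with h | ⟨_, _, h | h⟩
    · exact Or.inr (Or.inr h)
    · exact Or.inr (Or.inl h.1)
    · exact Or.inl h.1
  · by_contra hne
    push Not at hne
    have hr : ∀ i i', i ≠ i' → R.Adj (κ i) (κ i') := fun i i' h =>
      hred i i' h (by simpa using hne i i')
    exact red4 hfree (hc.kS 0) (hc.kS 1) (hc.kS 2) (hc.kS 3) (hr _ _ (by decide))
      (hr _ _ (by decide)) (hr _ _ (by decide)) (hr _ _ (by decide)) (hr _ _ (by decide))
      (hr _ _ (by decide))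
  · rintro i i' ⟨hb, h1, h1'⟩ e
    have ha := ((hJ i).resolve_left (by omega)).2.1 0
    have ha' := ((hJ i').resolve_left (by omega)).2.1 0
    rw [(hjJ i i' (by omega) (by omega) e).1] at ha
    exact tf _ _ _ ((hβ i i').1 hb) ha' ha
  · rintro i i' i'' ⟨hii, hb, h1, h3, h3', e⟩
    by_contra e'
    have hR : ∀ l, R.Adj (κ i) (γ (o i) l) := by
      rcases ((hJ i).resolve_left (by omega)).2.2 with h | h
      · exact h.2
      · omega
    have hR' : ∃ l, R.Adj (κ i') (γ (o i) l) ∧ R.Adj (κ i') (γ (o i) (l + 1)) := by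
      rw [(hjJ i i' (by omega) h3 e).2]
      rcases ((hJ i').resolve_left h3).2.2 with h | h
      · exact ⟨0, h.2 _, h.2 _⟩
      · exact h.2
    have hB : ∀ l, B.Adj (κ i'') (γ (o i) l) := by
      have := ((hJ i'').resolve_left h3').2.1
      rwa [hjJ' i'' i h3' (by omega) e'] at this
    obtain ⟨l, hl, hl'⟩ := hR'
    have hC : R.Adj (γ (o i) l) (γ (o i) (l + 1)) :=
      (hc.c (o i) l).resolve_left (fun h => tf _ _ _ (hB l) h (hB _))
    exact red4 hfree (hc.kS i) (hc.kS i') (hc.cS (o i) l) (hc.cS (o i) (l + 1))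
      (hred i i' hii hb) (hR _) (hR _) hl hl' hC
  · rintro i i' i'' ⟨n1, n2, n3, b1, b2, b3, d1, d2, d3, e1⟩ e2
    have hR : ∀ i, dM β i = 1 → ∀ l, R.Adj (κ i) (γ (o i) l) := by
      intro i hi
      rcases ((hJ i).resolve_left (by omega)).2.2 with h | h
      · exact h.2
      · omega
    have r1 := hR i d1 0
    have r2 := hR i' d2 0
    have r3 := hR i'' d3 0
    rw [← (hjJ i i' (by omega) (by omega) e1).2] at r2
    rw [← (hjJ i i'' (by omega) (by omega) e2).2] at r3
    exact red4 hfree (hc.kS i) (hc.kS i') (hc.kS i'') (hc.cS (o i) 0)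
      (hred _ _ n1 b1) (hred _ _ n2 b2) r1 (hred _ _ n3 b3) r2 r3

end small

section fin5
variable {p q : Fin 5 → Prop}

theorem odd_cycle (h : ∀ j, p j ∨ q j) : ∃ j, (p j ∧ p (j + 1)) ∨ (q j ∧ q (j + 1)) := by
  by_contra hn
  push Not at hn
  have e0 : (p 0 → ¬ p 1) ∧ (q 0 → ¬ q 1) := hn 0
  have e1 : (p 1 → ¬ p 2) ∧ (q 1 → ¬ q 2) := hn 1
  have e2 : (p 2 → ¬ p 3) ∧ (q 2 → ¬ q 3) := hn 2
  have e3 : (p 3 → ¬ p 4) ∧ (q 3 → ¬ q 4) := hn 3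
  have e4 : (p 4 → ¬ p 0) ∧ (q 4 → ¬ q 0) := hn 4
  have h0 := h 0
  have h1 := h 1
  have h2 := h 2
  have h3 := h 3
  have h4 := h 4
  grind only

theorem cover_edge (h : ∀ j, p j ∨ p (j + 1)) : ∃ j, p j ∧ p (j + 1) := by
  by_contra hn
  push Not at hn
  have e0 : p 0 → ¬ p 1 := hn 0
  have e1 : p 1 → ¬ p 2 := hn 1
  have e2 : p 2 → ¬ p 3 := hn 2
  have e3 : p 3 → ¬ p 4 := hn 3
  have e4 : p 4 → ¬ p 0 := hn 4
  have h0 : p 0 ∨ p 1 := h 0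
  have h1 : p 1 ∨ p 2 := h 1
  have h2 : p 2 ∨ p 3 := h 2
  have h3 : p 3 ∨ p 4 := h 3
  have h4 : p 4 ∨ p 0 := h 4
  grind only

theorem two_covers (h : ∀ j, p j ∨ p (j + 1)) (h' : ∀ j, q j ∨ q (j + 1)) :
    ∃ j, p j ∧ q j := by
  by_contra hn
  push Not at hn
  have e0 := hn 0
  have e1 := hn 1
  have e2 := hn 2
  have e3 := hn 3
  have e4 := hn 4
  have h0 : p 0 ∨ p 1 := h 0
  have h1 : p 1 ∨ p 2 := h 1
  have h2 : p 2 ∨ p 3 := h 2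
  have h3 : p 3 ∨ p 4 := h 3
  have h4 : p 4 ∨ p 0 := h 4
  have g0 : q 0 ∨ q 1 := h' 0
  have g1 : q 1 ∨ q 2 := h' 1
  have g2 : q 2 ∨ q 3 := h' 2
  have g3 : q 3 ∨ q 4 := h' 3
  have g4 : q 4 ∨ q 0 := h' 4
  grind only

theorem two_indep (h : ∀ j, ¬ (p j ∧ p (j + 1))) (h' : ∀ j, ¬ (q j ∧ q (j + 1))) :
    ∃ j, ¬ p j ∧ ¬ q j :=
  two_covers (p := fun j => ¬ p j) (q := fun j => ¬ q j)
    (fun j => not_and_or.1 (h j)) (fun j => not_and_or.1 (h' j))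

theorem all_or_none (h : ∀ j, p j → p (j + 1)) : (∀ j, p j) ∨ ∀ j, ¬ p j := by
  have e0 : p 0 → p 1 := h 0
  have e1 : p 1 → p 2 := h 1
  have e2 : p 2 → p 3 := h 2
  have e3 : p 3 → p 4 := h 3
  have e4 : p 4 → p 0 := h 4
  by_cases hp : p 0
  · left
    intro j
    fin_cases j
    · exact hp
    · exact e0 hp
    · exact e1 (e0 hp)
    · exact e2 (e1 (e0 hp))
    · exact e3 (e2 (e1 (e0 hp)))
  · right
    intro j hj
    apply hp
    fin_cases j
    · exact hj
    · exact e4 (e3 (e2 (e1 hj)))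
    · exact e4 (e3 (e2 hj))
    · exact e4 (e3 hj)
    · exact e4 hj

theorem no_alternate (h : ∀ k, p k ∨ q k) (hp : ∀ k, p k → ¬ p (k + 2))
    (hq : ∀ k, q k → ¬ q (k + 2)) : False := by
  have e0 : p 0 → ¬ p 2 := hp 0
  have e1 : p 1 → ¬ p 3 := hp 1
  have e2 : p 2 → ¬ p 4 := hp 2
  have e3 : p 3 → ¬ p 0 := hp 3
  have e4 : p 4 → ¬ p 1 := hp 4
  have g0 : q 0 → ¬ q 2 := hq 0
  have g1 : q 1 → ¬ q 3 := hq 1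
  have g2 : q 2 → ¬ q 4 := hq 2
  have g3 : q 3 → ¬ q 0 := hq 3
  have g4 : q 4 → ¬ q 1 := hq 4
  have h0 := h 0
  have h1 := h 1
  have h2 := h 2
  have h3 := h 3
  have h4 := h 4
  grind only

/-- The configuration used at the end of the blue case. -/
theorem find_abc (h : ∀ j, ¬ (p j ∧ p (j + 1))) (h' : ∀ j, ¬ (q j ∧ q (j + 1)))
    (hd : ∀ j, ¬ (p j ∧ q j)) (hc : ∀ j, p j ∨ q j ∨ p (j + 1) ∨ q (j + 1)) :
    ∃ a b c, ((b = a + 1 ∧ c = a + 2) ∨ (b = a + 4 ∧ c = a + 3)) ∧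
      ((q a ∧ ¬ p a ∧ ¬ p b ∧ ¬ q b ∧ ¬ q c) ∨ (p a ∧ ¬ q a ∧ ¬ q b ∧ ¬ p b ∧ ¬ p c)) := by
  -- an index outside both sets exists
  have e0 : ¬ (p 0 ∧ p 1) := h 0
  have e1 : ¬ (p 1 ∧ p 2) := h 1
  have e2 : ¬ (p 2 ∧ p 3) := h 2
  have e3 : ¬ (p 3 ∧ p 4) := h 3
  have e4 : ¬ (p 4 ∧ p 0) := h 4
  have g0 : ¬ (q 0 ∧ q 1) := h' 0
  have g1 : ¬ (q 1 ∧ q 2) := h' 1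
  have g2 : ¬ (q 2 ∧ q 3) := h' 2
  have g3 : ¬ (q 3 ∧ q 4) := h' 3
  have g4 : ¬ (q 4 ∧ q 0) := h' 4
  obtain ⟨j, hj, hj'⟩ := two_indep h h'
  have c1 := hc j
  have c2 := hc (j + 4)
  have j41 : j + 4 + 1 = j := by omega
  have i2 := h (j + 1)
  have i2' := h' (j + 1)
  have i3 := h (j + 2)
  have i3' := h' (j + 2)
  have i4 := h (j + 3)
  have i4' := h' (j + 3)
  have c3 := hc (j + 2)
  have d1 := hd (j + 1)
  have d2 := hd (j + 2)
  have d3 := hd (j + 3)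
  have d4 := hd (j + 4)
  simp only [add_assoc, Fin.reduceAdd, j41] at *
  by_contra hn
  push Not at hn
  have n1 := hn (j + 1) j (j + 4) (Or.inr ⟨by omega, by omega⟩)
  have n2 := hn (j + 4) j (j + 1) (Or.inl ⟨by omega, by omega⟩)
  grind only

end fin5

/-- Two colours, no blue triangle, no red `K_4`. -/
structure Good {V : Type*} (B R : SimpleGraph V) : Prop where
  tf : ∀ x y z, B.Adj x y → B.Adj y z → B.Adj x z → False
  r4 : ∀ x y z w, R.Adj x y → R.Adj x z → R.Adj x w → R.Adj y z → R.Adj y w → R.Adj z w → False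

section caseA
variable {V : Type*} {B R : SimpleGraph V}

theorem adj_symm' {x y : V} (h : B.Adj x y ∨ R.Adj x y) : B.Adj y x ∨ R.Adj y x :=
  h.imp (fun h => h.symm) (fun h => h.symm)

theorem Good.f3 (g : Good B R) {c c' x u : V} (cc : R.Adj c c') (xu : R.Adj x u)
    (h1 : B.Adj c x ∨ R.Adj c x) (h2 : B.Adj c' x ∨ R.Adj c' x)
    (h3 : B.Adj c u ∨ R.Adj c u) (h4 : B.Adj c' u ∨ R.Adj c' u) :
    B.Adj c x ∨ B.Adj c' x ∨ B.Adj c u ∨ B.Adj c' u := by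
  by_contra hn
  push Not at hn
  exact g.r4 c c' x u cc (h1.resolve_left hn.1) (h3.resolve_left hn.2.2.1)
    (h2.resolve_left hn.2.1) (h4.resolve_left hn.2.2.2) xu

theorem mono_aux (g : Good B R) {v x y z : V} {ε : Fin 5 → V} (vx : R.Adj v x) (vy : R.Adj v y)
    (vz : R.Adj v z) (vε : ∀ j, R.Adj v (ε j)) (ee : ∀ j, B.Adj (ε j) (ε (j + 1)) ∨
      R.Adj (ε j) (ε (j + 1))) (xe : ∀ j, B.Adj x (ε j) ∨ R.Adj x (ε j))
    (ye : ∀ j, B.Adj y (ε j) ∨ R.Adj y (ε j)) (ze : ∀ j, B.Adj z (ε j) ∨ R.Adj z (ε j))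
    (yx : B.Adj y x) (yz : R.Adj y z) : False := by
  obtain ⟨j, ⟨h, h'⟩ | ⟨h, h'⟩⟩ := odd_cycle ye
  · have e := (ee j).resolve_left (fun e => g.tf _ _ _ h e h')
    have x1 := (xe j).resolve_left (fun e => g.tf _ _ _ yx e h)
    have x2 := (xe (j + 1)).resolve_left (fun e => g.tf _ _ _ yx e h')
    exact g.r4 _ _ _ _ vx (vε _) (vε _) x1 x2 e
  · have e := (ee j).resolve_right (fun e => g.r4 _ _ _ _ vy (vε _) (vε _) h h' e)
    have z1 := (ze j).resolve_right (fun e => g.r4 _ _ _ _ vy vz (vε _) yz h e)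
    have z2 := (ze (j + 1)).resolve_right (fun e => g.r4 _ _ _ _ vy vz (vε _) yz h' e)
    exact g.tf _ _ _ z1 e z2

theorem mono_cycle (g : Good B R) {v : V} {δ ε : Fin 5 → V} (vδ : ∀ j, R.Adj v (δ j))
    (vε : ∀ j, R.Adj v (ε j))
    (dd : ∀ j, B.Adj (δ j) (δ (j + 1)) ∨ R.Adj (δ j) (δ (j + 1)))
    (ee : ∀ j, B.Adj (ε j) (ε (j + 1)) ∨ R.Adj (ε j) (ε (j + 1)))
    (de : ∀ i j, B.Adj (δ i) (ε j) ∨ R.Adj (δ i) (ε j)) :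
    (∀ j, B.Adj (δ j) (δ (j + 1))) ∨ ∀ j, R.Adj (δ j) (δ (j + 1)) := by
  have h : ∀ j, B.Adj (δ j) (δ (j + 1)) → B.Adj (δ (j + 1)) (δ (j + 1 + 1)) := by
    intro j h
    refine (dd (j + 1)).resolve_right (fun h' => ?_)
    exact mono_aux g (vδ j) (vδ (j + 1)) (vδ (j + 1 + 1)) vε ee (de _) (de _) (de _) h.symm h'
  rcases all_or_none h with h | h
  · exact Or.inl h
  · exact Or.inr (fun j => (dd j).resolve_left (h j))

theorem mixed (g : Good B R) {v : V} {δ ε : Fin 5 → V} (vδ : ∀ j, R.Adj v (δ j))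
    (vε : ∀ j, R.Adj v (ε j)) (dd : ∀ j, R.Adj (δ j) (δ (j + 1)))
    (ee : ∀ j, B.Adj (ε j) (ε (j + 1)))
    (de : ∀ i j, B.Adj (δ i) (ε j) ∨ R.Adj (δ i) (ε j)) : False := by
  have hc : ∀ j i, B.Adj (δ i) (ε j) ∨ B.Adj (δ (i + 1)) (ε j) := by
    intro j i
    by_contra hn
    push Not at hn
    exact g.r4 _ _ _ _ (vδ i) (vδ (i + 1)) (vε j) (dd i) ((de _ _).resolve_left hn.1)
      ((de _ _).resolve_left hn.2)
  obtain ⟨i, h, h'⟩ := two_covers (hc 0) (hc (0 + 1))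
  exact g.tf _ _ _ h (ee 0) h'

theorem emp (g : Good B R) {a a' : V} {β γ : Fin 5 → V}
    (f1 : ∀ i, B.Adj a (β i) ∨ B.Adj a' (β i) ∨ B.Adj a (β (i + 1)) ∨ B.Adj a' (β (i + 1)))
    (hP : ∀ i, ¬ B.Adj a (β i)) (f2 : ∀ j i, B.Adj (γ j) (β i) ∨ B.Adj (γ j) (β (i + 1))) :
    ∀ j, ¬ B.Adj a' (γ j) := by
  intro j hj
  obtain ⟨i, h, h'⟩ := cover_edge (p := fun i => B.Adj a' (β i)) (by
    intro i
    have h1 := hP i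
    have h2 := hP (i + 1)
    have h3 := f1 i
    grind only)
  rcases f2 j i with e | e
  · exact g.tf _ _ _ hj e h
  · exact g.tf _ _ _ hj e h'

theorem indep (g : Good B R) {a a' x : V} {γ : Fin 5 → V} (aa : R.Adj a a')
    (cc : ∀ j, R.Adj (γ j) (γ (j + 1))) (f2 : ∀ j, B.Adj x (γ j) ∨ B.Adj x (γ (j + 1)))
    (ac : ∀ j, B.Adj a (γ j) ∨ R.Adj a (γ j)) (ac' : ∀ j, B.Adj a' (γ j) ∨ R.Adj a' (γ j))
    (h : B.Adj a x) (h' : B.Adj a' x) : False := by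
  obtain ⟨j, e, e'⟩ := cover_edge f2
  exact g.r4 _ _ _ _ aa ((ac j).resolve_left (fun k => g.tf _ _ _ h e k))
    ((ac (j + 1)).resolve_left (fun k => g.tf _ _ _ h e' k))
    ((ac' j).resolve_left (fun k => g.tf _ _ _ h' e k))
    ((ac' (j + 1)).resolve_left (fun k => g.tf _ _ _ h' e' k)) (cc j)

theorem aRed (g : Good B R) {v : V} {α β γ : Fin 5 → V}
    (vb : ∀ j, R.Adj v (β j)) (vc : ∀ j, R.Adj v (γ j))
    (aa : ∀ j, R.Adj (α j) (α (j + 1))) (bb : ∀ j, R.Adj (β j) (β (j + 1)))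
    (cc : ∀ j, R.Adj (γ j) (γ (j + 1)))
    (ab : ∀ i j, B.Adj (α i) (β j) ∨ R.Adj (α i) (β j))
    (ac : ∀ i j, B.Adj (α i) (γ j) ∨ R.Adj (α i) (γ j))
    (bc : ∀ i j, B.Adj (β i) (γ j) ∨ R.Adj (β i) (γ j)) : False := by
  have f2 : ∀ i j, B.Adj (β i) (γ j) ∨ B.Adj (β i) (γ (j + 1)) := by
    intro i j
    by_contra hn
    push Not at hn
    exact g.r4 _ _ _ _ (vb i) (vc j) (vc (j + 1)) ((bc _ _).resolve_left hn.1)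
      ((bc _ _).resolve_left hn.2) (cc j)
  have f2' : ∀ j i, B.Adj (γ j) (β i) ∨ B.Adj (γ j) (β (i + 1)) := by
    intro j i
    by_contra hn
    push Not at hn
    exact g.r4 _ _ _ _ (vc j) (vb i) (vb (i + 1)) ((adj_symm' (bc _ _)).resolve_left hn.1)
      ((adj_symm' (bc _ _)).resolve_left hn.2) (bb i)
  have f1b := fun k i => g.f3 (aa k) (bb i) (ab _ _) (ab _ _) (ab _ _) (ab _ _)
  have f1c := fun k i => g.f3 (aa k) (cc i) (ac _ _) (ac _ _) (ac _ _) (ac _ _)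
  have st1 : ∀ k, (∀ i, ¬ B.Adj (α k) (β i)) → ∀ i, ¬ B.Adj (α (k + 1)) (γ i) := fun k h =>
    emp g (f1b k) h f2'
  have st2 : ∀ k, (∀ i, ¬ B.Adj (α k) (γ i)) → ∀ i, ¬ B.Adj (α (k + 1)) (β i) := fun k h =>
    emp g (f1c k) h f2
  have e5 : ∀ k : Fin 5, k + 1 + 1 + 1 + 1 + 1 = k := by decide
  have neP : ∀ k, ∃ i, B.Adj (α k) (β i) := by
    intro k
    by_contra hn
    push Not at hn
    have h1 := st1 _ hn
    have h5 := st1 _ (st2 _ (st1 _ (st2 _ h1)))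
    rw [e5] at h5
    rcases f1c k 0 with h | h | h | h
    · exact h5 _ h
    · exact h1 _ h
    · exact h5 _ h
    · exact h1 _ h
  have neQ : ∀ k, ∃ i, B.Adj (α k) (γ i) := by
    intro k
    by_contra hn
    push Not at hn
    have h1 := st2 _ hn
    have h5 := st2 _ (st1 _ (st2 _ (st1 _ h1)))
    rw [e5] at h5
    rcases f1b k 0 with h | h | h | h
    · exact h5 _ h
    · exact h1 _ h
    · exact h5 _ h
    · exact h1 _ h
  have inP : ∀ k i, B.Adj (α k) (β i) → ¬ B.Adj (α (k + 1)) (β i) := fun k i h h' =>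
    indep g (aa k) cc (f2 i) (ac _) (ac _) h h'
  have inQ : ∀ k i, B.Adj (α k) (γ i) → ¬ B.Adj (α (k + 1)) (γ i) := fun k i h h' =>
    indep g (aa k) bb (f2' i) (ab _) (ab _) h h'
  have pair : ∀ k i j, B.Adj (α k) (β i) → B.Adj (α k) (γ j) →
      ((B.Adj (α (k + 2)) (β i) ∧ B.Adj (α (k + 3)) (γ j)) ∧
        ¬ B.Adj (α (k + 3)) (β i) ∧ ¬ B.Adj (α (k + 2)) (γ j)) ∨
      ((B.Adj (α (k + 3)) (β i) ∧ B.Adj (α (k + 2)) (γ j)) ∧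
        ¬ B.Adj (α (k + 2)) (β i) ∧ ¬ B.Adj (α (k + 3)) (γ j)) := by
    intro k i j h h'
    have xu := (bc i j).resolve_left (fun e => g.tf _ _ _ h e h')
    have F1 := g.f3 (aa (k + 1)) xu (ab _ _) (ab _ _) (ac _ _) (ac _ _)
    have F3 := g.f3 (aa (k + 3)) xu (ab _ _) (ab _ _) (ac _ _) (ac _ _)
    have p0 := inP k i h
    have q0 := inQ k j h'
    have p2 := inP (k + 2) i
    have q2 := inQ (k + 2) j
    have p4 := inP (k + 4) i
    have q4 := inQ (k + 4) j
    have k41 : k + 5 = k := by omega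
    simp only [add_assoc, Fin.reduceAdd] at *
    have k50 : k + 0 = k := by omega
    simp only [k50] at *
    clear f2 f2' f1b f1c st1 st2 e5 neP neQ inP inQ k41 k50
    grind only
  refine no_alternate
    (p := fun k => (∀ i, B.Adj (α k) (β i) → B.Adj (α (k + 2)) (β i)))
    (q := fun k => (∀ i, B.Adj (α k) (γ i) → B.Adj (α (k + 2)) (γ i))) ?_ ?_ ?_
  · intro k
    obtain ⟨i, hi⟩ := neP k
    obtain ⟨j, hj⟩ := neQ k
    rcases pair k i j hi hj with h | h
    · left
      intro i' hi'
      have := pair k i' j hi' hj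
      tauto
    · right
      intro j' hj'
      have := pair k i j' hi hj'
      tauto
  · intro k h h'
    obtain ⟨i, hi⟩ := neP k
    have h4 := h' i (h i hi)
    refine inP (k + 2 + 2) i h4 ?_
    have : k + 2 + 2 + 1 = k := by omega
    rwa [this]
  · intro k h h'
    obtain ⟨i, hi⟩ := neQ k
    have h4 := h' i (h i hi)
    refine inQ (k + 2 + 2) i h4 ?_
    have : k + 2 + 2 + 1 = k := by omega
    rwa [this]

theorem indepJ (g : Good B R) {α β : Fin 5 → V} {u u' : V} (aa : ∀ j, R.Adj (α j) (α (j + 1)))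
    (ab : ∀ i j, B.Adj (α i) (β j) ∨ R.Adj (α i) (β j))
    (au : ∀ i, B.Adj (α i) u ∨ R.Adj (α i) u) (au' : ∀ i, B.Adj (α i) u' ∨ R.Adj (α i) u')
    (bu : ∀ i, B.Adj (β i) u ∨ R.Adj (β i) u) (bu' : ∀ i, B.Adj (β i) u' ∨ R.Adj (β i) u')
    (uu : B.Adj u u') (X : ∀ k, ∃ i, ¬ B.Adj (α k) (β i) ∧ ¬ B.Adj (α (k + 1)) (β i))
    (hn : ¬ ∀ k, B.Adj (α k) u ∨ B.Adj (α (k + 1)) u) :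
    ∀ k, ¬ (B.Adj (α k) u ∧ B.Adj (α (k + 1)) u) := by
  rintro k ⟨h, h'⟩
  push Not at hn
  obtain ⟨k0, n1, n2⟩ := hn
  obtain ⟨i, x1, x2⟩ := X k0
  have xu : B.Adj (β i) u := (bu i).resolve_right (fun r => by
    have := g.f3 (aa k0) r (ab _ _) (ab _ _) (au _) (au _)
    grind only)
  exact g.r4 _ _ _ _ (aa k)
    ((ab _ i).resolve_left (fun e => g.tf _ _ _ e xu h))
    ((au' k).resolve_left (fun e => g.tf _ _ _ h uu e))
    ((ab _ i).resolve_left (fun e => g.tf _ _ _ e xu h'))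
    ((au' (k + 1)).resolve_left (fun e => g.tf _ _ _ h' uu e))
    ((bu' i).resolve_left (fun e => g.tf _ _ _ xu uu e))

theorem fin_aBlue (g : Good B R) {a b c y u u' : V} (ab : R.Adj a b) (bc : R.Adj b c)
    (ay : B.Adj a y ∨ R.Adj a y) (yb : B.Adj b y ∨ R.Adj b y) (cy : B.Adj c y ∨ R.Adj c y)
    (au : B.Adj a u ∨ R.Adj a u) (bu : B.Adj b u ∨ R.Adj b u)
    (bu' : B.Adj b u' ∨ R.Adj b u') (cu' : B.Adj c u' ∨ R.Adj c u')
    (yu : B.Adj y u ∨ R.Adj y u) (yu' : B.Adj y u' ∨ R.Adj y u') (uu : B.Adj u u')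
    (h1 : B.Adj a u') (h2 : ¬ B.Adj a u) (h3 : ¬ B.Adj b u) (h4 : ¬ B.Adj b u')
    (h5 : ¬ B.Adj c u') (hb : ¬ B.Adj b y) (hc : ¬ B.Adj c y) : False := by
  have e1 : B.Adj y u' := yu'.resolve_right (fun r => by
    have := g.f3 bc r yb cy bu' cu'
    grind only)
  have e2 : R.Adj y u := yu.resolve_left (fun e => g.tf _ _ _ e uu e1)
  have e3 := g.f3 ab e2 ay yb au bu
  have e4 : B.Adj a y := by grind only
  exact g.tf _ _ _ e4 e1 h1

theorem aBlue (g : Good B R) {α β γ : Fin 5 → V}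
    (aa : ∀ j, R.Adj (α j) (α (j + 1))) (bb : ∀ j, B.Adj (β j) (β (j + 1)))
    (cc : ∀ j, B.Adj (γ j) (γ (j + 1)))
    (ab : ∀ i j, B.Adj (α i) (β j) ∨ R.Adj (α i) (β j))
    (ac : ∀ i j, B.Adj (α i) (γ j) ∨ R.Adj (α i) (γ j))
    (bc : ∀ i j, B.Adj (β i) (γ j) ∨ R.Adj (β i) (γ j)) : False := by
  have X : ∀ k, ∃ i, ¬ B.Adj (α k) (β i) ∧ ¬ B.Adj (α (k + 1)) (β i) := fun k =>
    two_indep (fun i h => g.tf _ _ _ h.1 (bb i) h.2) (fun i h => g.tf _ _ _ h.1 (bb i) h.2)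
  obtain ⟨j, h | h⟩ := odd_cycle
    (p := fun j => ∀ k, B.Adj (α k) (γ j) ∨ B.Adj (α (k + 1)) (γ j))
    (q := fun j => ¬ ∀ k, B.Adj (α k) (γ j) ∨ B.Adj (α (k + 1)) (γ j)) (fun j => Classical.em _)
  · obtain ⟨i, h1, h2⟩ := two_covers h.1 h.2
    exact g.tf _ _ _ h1 (cc j) h2
  have J := indepJ g aa ab (fun i => ac i j) (fun i => ac i (j + 1)) (fun i => bc i j)
    (fun i => bc i (j + 1)) (cc j) X h.1
  have J' := indepJ g aa ab (fun i => ac i (j + 1)) (fun i => ac i j) (fun i => bc i (j + 1))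
    (fun i => bc i j) (cc j).symm X h.2
  have hd : ∀ k, ¬ (B.Adj (α k) (γ j) ∧ B.Adj (α k) (γ (j + 1))) := fun k h =>
    g.tf _ _ _ h.1 (cc j) h.2
  have hc : ∀ k, B.Adj (α k) (γ j) ∨ B.Adj (α k) (γ (j + 1)) ∨ B.Adj (α (k + 1)) (γ j) ∨
      B.Adj (α (k + 1)) (γ (j + 1)) := by
    intro k
    by_contra hn
    push Not at hn
    obtain ⟨i, x1, x2⟩ := X k
    have e1 := (bc i j).resolve_right (fun r => by
      have := g.f3 (aa k) r (ab _ _) (ab _ _) (ac _ _) (ac _ _)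
      tauto)
    have e2 := (bc i (j + 1)).resolve_right (fun r => by
      have := g.f3 (aa k) r (ab _ _) (ab _ _) (ac _ _) (ac _ _)
      tauto)
    exact g.tf _ _ _ e1 (cc j) e2
  obtain ⟨a, b, c, hpos, hval⟩ := find_abc J J' hd hc
  have key : R.Adj (α a) (α b) ∧ R.Adj (α b) (α c) ∧
      ∃ i, ¬ B.Adj (α b) (β i) ∧ ¬ B.Adj (α c) (β i) := by
    rcases hpos with ⟨rfl, rfl⟩ | ⟨rfl, rfl⟩
    · have e := aa (a + 1)
      have x := X (a + 1)
      rw [add_assoc] at e x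
      exact ⟨aa a, e, x⟩
    · have e := aa (a + 4)
      have e' := aa (a + 3)
      have x := X (a + 3)
      have h5 : a + 4 + 1 = a := by omega
      have h4 : a + 3 + 1 = a + 4 := by omega
      rw [h5] at e
      rw [h4] at e' x
      obtain ⟨i, x1, x2⟩ := x
      exact ⟨e.symm, e'.symm, i, x2, x1⟩
  obtain ⟨k1, k2, i, k3, k4⟩ := key
  rcases hval with ⟨h1, h2, h3, h4, h5⟩ | ⟨h1, h2, h3, h4, h5⟩
  · exact fin_aBlue g k1 k2 (ab _ i) (ab _ _) (ab _ _) (ac _ _) (ac _ _) (ac _ _) (ac _ _)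
      (bc _ _) (bc _ _) (cc j) h1 h2 h3 h4 h5 k3 k4
  · exact fin_aBlue g k1 k2 (ab _ i) (ab _ _) (ab _ _) (ac _ _) (ac _ _) (ac _ _) (ac _ _)
      (bc _ _) (bc _ _) (cc j).symm h1 h2 h3 h4 h5 k3 k4

theorem caseA (g : Good B R) {v : V} {α β γ : Fin 5 → V}
    (va : ∀ j, B.Adj v (α j)) (vb : ∀ j, R.Adj v (β j)) (vc : ∀ j, R.Adj v (γ j))
    (aa : ∀ j, B.Adj (α j) (α (j + 1)) ∨ R.Adj (α j) (α (j + 1)))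
    (bb : ∀ j, B.Adj (β j) (β (j + 1)) ∨ R.Adj (β j) (β (j + 1)))
    (cc : ∀ j, B.Adj (γ j) (γ (j + 1)) ∨ R.Adj (γ j) (γ (j + 1)))
    (ab : ∀ i j, B.Adj (α i) (β j) ∨ R.Adj (α i) (β j))
    (ac : ∀ i j, B.Adj (α i) (γ j) ∨ R.Adj (α i) (γ j))
    (bc : ∀ i j, B.Adj (β i) (γ j) ∨ R.Adj (β i) (γ j)) : False := by
  have ar : ∀ j, R.Adj (α j) (α (j + 1)) := fun j =>
    (aa j).resolve_left (fun e => g.tf _ _ _ (va j) e (va _))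
  have cb : ∀ i j, B.Adj (γ i) (β j) ∨ R.Adj (γ i) (β j) := fun i j => adj_symm' (bc j i)
  rcases mono_cycle g vb vc bb cc bc with hb | hb <;> rcases mono_cycle g vc vb cc bb cb with h | h
  · exact aBlue g ar hb h ab ac bc
  · exact mixed g vc vb h hb cb
  · exact mixed g vb vc hb h bc
  · exact aRed g vb vc ar hb h ab ac bc

end caseA

section caseB

set_option maxHeartbeats 1000000 in
/-- The propositional core of the second case. -/
theorem core_B (s p q t : Fin 5 → Prop) (s' e : Prop)
    (h1 : ∀ i, q i → ¬ (s i ↔ s'))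
    (h2 : ∀ i, p i → ¬ (s i ↔ s (i + 1)))
    (h3 : ∀ i, p i ∨ q i ∨ q (i + 1))
    (h4 : ∀ i, ¬ s' → ¬ (q i ∧ q (i + 1)))
    (h5 : ∀ i, ¬ s i → ¬ (p i ∧ q i))
    (h6 : ∀ i, ¬ s (i + 1) → ¬ (p i ∧ q (i + 1)))
    (h7 : ∀ i, q i ∨ t i ∨ e)
    (h8 : ∀ i, ¬ s i → ¬ (q i ∧ t i))
    (h9 : ∀ i, ¬ s' → ¬ (q i ∧ e))
    (h10 : ∀ i, p i ∨ t i ∨ t (i + 1))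
    (h11 : ∀ i, ¬ (p i ∧ t i ∧ t (i + 1)))
    (h12 : ∀ i, ¬ s i → ¬ (p i ∧ t i))
    (h13 : ∀ i, ¬ s (i + 1) → ¬ (p i ∧ t (i + 1)))
    (h14 : ∀ i, ¬ (q i ∧ t i ∧ e)) : False := by
  have h1_0 : q 0 → ¬ (s 0 ↔ s') := h1 0
  have h2_0 : p 0 → ¬ (s 0 ↔ s 1) := h2 0
  have h3_0 : p 0 ∨ q 0 ∨ q 1 := h3 0
  have h4_0 : ¬ s' → ¬ (q 0 ∧ q 1) := h4 0
  have h5_0 : ¬ s 0 → ¬ (p 0 ∧ q 0) := h5 0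
  have h6_0 : ¬ s 1 → ¬ (p 0 ∧ q 1) := h6 0
  have h7_0 : q 0 ∨ t 0 ∨ e := h7 0
  have h8_0 : ¬ s 0 → ¬ (q 0 ∧ t 0) := h8 0
  have h9_0 : ¬ s' → ¬ (q 0 ∧ e) := h9 0
  have h10_0 : p 0 ∨ t 0 ∨ t 1 := h10 0
  have h11_0 : ¬ (p 0 ∧ t 0 ∧ t 1) := h11 0
  have h12_0 : ¬ s 0 → ¬ (p 0 ∧ t 0) := h12 0
  have h13_0 : ¬ s 1 → ¬ (p 0 ∧ t 1) := h13 0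
  have h14_0 : ¬ (q 0 ∧ t 0 ∧ e) := h14 0
  have h1_1 : q 1 → ¬ (s 1 ↔ s') := h1 1
  have h2_1 : p 1 → ¬ (s 1 ↔ s 2) := h2 1
  have h3_1 : p 1 ∨ q 1 ∨ q 2 := h3 1
  have h4_1 : ¬ s' → ¬ (q 1 ∧ q 2) := h4 1
  have h5_1 : ¬ s 1 → ¬ (p 1 ∧ q 1) := h5 1
  have h6_1 : ¬ s 2 → ¬ (p 1 ∧ q 2) := h6 1
  have h7_1 : q 1 ∨ t 1 ∨ e := h7 1
  have h8_1 : ¬ s 1 → ¬ (q 1 ∧ t 1) := h8 1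
  have h9_1 : ¬ s' → ¬ (q 1 ∧ e) := h9 1
  have h10_1 : p 1 ∨ t 1 ∨ t 2 := h10 1
  have h11_1 : ¬ (p 1 ∧ t 1 ∧ t 2) := h11 1
  have h12_1 : ¬ s 1 → ¬ (p 1 ∧ t 1) := h12 1
  have h13_1 : ¬ s 2 → ¬ (p 1 ∧ t 2) := h13 1
  have h14_1 : ¬ (q 1 ∧ t 1 ∧ e) := h14 1
  have h1_2 : q 2 → ¬ (s 2 ↔ s') := h1 2
  have h2_2 : p 2 → ¬ (s 2 ↔ s 3) := h2 2
  have h3_2 : p 2 ∨ q 2 ∨ q 3 := h3 2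
  have h4_2 : ¬ s' → ¬ (q 2 ∧ q 3) := h4 2
  have h5_2 : ¬ s 2 → ¬ (p 2 ∧ q 2) := h5 2
  have h6_2 : ¬ s 3 → ¬ (p 2 ∧ q 3) := h6 2
  have h7_2 : q 2 ∨ t 2 ∨ e := h7 2
  have h8_2 : ¬ s 2 → ¬ (q 2 ∧ t 2) := h8 2
  have h9_2 : ¬ s' → ¬ (q 2 ∧ e) := h9 2
  have h10_2 : p 2 ∨ t 2 ∨ t 3 := h10 2
  have h11_2 : ¬ (p 2 ∧ t 2 ∧ t 3) := h11 2
  have h12_2 : ¬ s 2 → ¬ (p 2 ∧ t 2) := h12 2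
  have h13_2 : ¬ s 3 → ¬ (p 2 ∧ t 3) := h13 2
  have h14_2 : ¬ (q 2 ∧ t 2 ∧ e) := h14 2
  have h1_3 : q 3 → ¬ (s 3 ↔ s') := h1 3
  have h2_3 : p 3 → ¬ (s 3 ↔ s 4) := h2 3
  have h3_3 : p 3 ∨ q 3 ∨ q 4 := h3 3
  have h4_3 : ¬ s' → ¬ (q 3 ∧ q 4) := h4 3
  have h5_3 : ¬ s 3 → ¬ (p 3 ∧ q 3) := h5 3
  have h6_3 : ¬ s 4 → ¬ (p 3 ∧ q 4) := h6 3
  have h7_3 : q 3 ∨ t 3 ∨ e := h7 3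
  have h8_3 : ¬ s 3 → ¬ (q 3 ∧ t 3) := h8 3
  have h9_3 : ¬ s' → ¬ (q 3 ∧ e) := h9 3
  have h10_3 : p 3 ∨ t 3 ∨ t 4 := h10 3
  have h11_3 : ¬ (p 3 ∧ t 3 ∧ t 4) := h11 3
  have h12_3 : ¬ s 3 → ¬ (p 3 ∧ t 3) := h12 3
  have h13_3 : ¬ s 4 → ¬ (p 3 ∧ t 4) := h13 3
  have h14_3 : ¬ (q 3 ∧ t 3 ∧ e) := h14 3
  have h1_4 : q 4 → ¬ (s 4 ↔ s') := h1 4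
  have h2_4 : p 4 → ¬ (s 4 ↔ s 0) := h2 4
  have h3_4 : p 4 ∨ q 4 ∨ q 0 := h3 4
  have h4_4 : ¬ s' → ¬ (q 4 ∧ q 0) := h4 4
  have h5_4 : ¬ s 4 → ¬ (p 4 ∧ q 4) := h5 4
  have h6_4 : ¬ s 0 → ¬ (p 4 ∧ q 0) := h6 4
  have h7_4 : q 4 ∨ t 4 ∨ e := h7 4
  have h8_4 : ¬ s 4 → ¬ (q 4 ∧ t 4) := h8 4
  have h9_4 : ¬ s' → ¬ (q 4 ∧ e) := h9 4
  have h10_4 : p 4 ∨ t 4 ∨ t 0 := h10 4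
  have h11_4 : ¬ (p 4 ∧ t 4 ∧ t 0) := h11 4
  have h12_4 : ¬ s 4 → ¬ (p 4 ∧ t 4) := h12 4
  have h13_4 : ¬ s 0 → ¬ (p 4 ∧ t 0) := h13 4
  have h14_4 : ¬ (q 4 ∧ t 4 ∧ e) := h14 4
  clear h1 h2 h3 h4 h5 h6 h7 h8 h9 h10 h11 h12 h13 h14
  generalize s 0 = s0, s 1 = s1, s 2 = s2, s 3 = s3, s 4 = s4 at *
  generalize p 0 = p0, p 1 = p1, p 2 = p2, p 3 = p3, p 4 = p4 at *
  generalize q 0 = q0, q 1 = q1, q 2 = q2, q 3 = q3, q 4 = q4 at *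
  generalize t 0 = t0, t 1 = t1, t 2 = t2, t 3 = t3, t 4 = t4 at *
  by_cases a : s' <;> by_cases a0 : s0 <;> by_cases a1 : s1 <;> by_cases a2 : s2 <;>
    by_cases a3 : s3 <;> by_cases a4 : s4 <;> grind only

variable {V : Type*} {B R : SimpleGraph V}

theorem caseB (g : Good B R) {v a w w' : V} {α β : Fin 5 → V}
    (va : ∀ j, R.Adj v (α j)) (vb : ∀ j, B.Adj v (β j)) (v1 : B.Adj v a) (v2 : R.Adj v w)
    (v3 : R.Adj v w')
    (aa : ∀ j, B.Adj (α j) (α (j + 1)) ∨ R.Adj (α j) (α (j + 1)))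
    (bb : ∀ j, B.Adj (β j) (β (j + 1)) ∨ R.Adj (β j) (β (j + 1)))
    (ab : ∀ i j, B.Adj (α i) (β j) ∨ R.Adj (α i) (β j))
    (a1 : ∀ i, B.Adj (α i) a ∨ R.Adj (α i) a)
    (a2 : ∀ i, B.Adj (α i) w ∨ R.Adj (α i) w)
    (a3 : ∀ i, B.Adj (α i) w' ∨ R.Adj (α i) w')
    (b1 : ∀ i, B.Adj a (β i) ∨ R.Adj a (β i))
    (b2 : ∀ i, B.Adj w (β i) ∨ R.Adj w (β i))
    (b3 : ∀ i, B.Adj w' (β i) ∨ R.Adj w' (β i))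
    (w1 : B.Adj w' a ∨ R.Adj w' a) (w2 : B.Adj w' w ∨ R.Adj w' w) : False := by
  have br : ∀ j, R.Adj (β j) (β (j + 1)) := fun j =>
    (bb j).resolve_left (fun e => g.tf _ _ _ (vb j) e (vb _))
  have b1r : ∀ j, R.Adj a (β j) := fun j =>
    (b1 j).resolve_left (fun e => g.tf _ _ _ v1 e (vb _))
  -- dichotomy
  have dich : ∀ z, (B.Adj z a ∨ R.Adj z a) → (∀ i, B.Adj z (β i) ∨ R.Adj z (β i)) →
      ¬ B.Adj z a → ∀ i, B.Adj z (β i) ∨ B.Adj z (β (i + 1)) := by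
    intro z za zb hz i
    by_contra hn
    push Not at hn
    exact g.r4 _ _ _ _ (za.resolve_left hz) ((zb _).resolve_left hn.1)
      ((zb _).resolve_left hn.2) (b1r _) (b1r _) (br i)
  have f12 : ∀ z z', (B.Adj z a ∨ R.Adj z a) → (∀ i, B.Adj z (β i) ∨ R.Adj z (β i)) →
      (B.Adj z' a ∨ R.Adj z' a) → (∀ i, B.Adj z' (β i) ∨ R.Adj z' (β i)) → B.Adj z z' →
      ¬ (B.Adj z a ↔ B.Adj z' a) := by
    intro z z' h1 h2 h1' h2' hz hiff
    by_cases hs : B.Adj z a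
    · exact g.tf _ _ _ hz (hiff.1 hs) hs
    · obtain ⟨i, hi, hi'⟩ := two_covers (dich z h1 h2 hs) (dich z' h1' h2' (fun h => hs (hiff.2 h)))
      exact g.tf _ _ _ hz hi' hi
  have f3 : ∀ z y y', (B.Adj z a ∨ R.Adj z a) → (∀ i, B.Adj z (β i) ∨ R.Adj z (β i)) →
      (∀ i, B.Adj y (β i) ∨ R.Adj y (β i)) → (∀ i, B.Adj y' (β i) ∨ R.Adj y' (β i)) →
      (B.Adj y y' ∨ R.Adj y y') → ¬ B.Adj z a → ¬ (B.Adj z y ∧ B.Adj z y') := by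
    rintro z y y' h1 h2 hy hy' yy hs ⟨e, e'⟩
    obtain ⟨i, hi, hi'⟩ := cover_edge (dich z h1 h2 hs)
    exact g.r4 y y' _ _ (yy.resolve_left (fun k => g.tf _ _ _ e k e'))
      ((hy _).resolve_left (fun k => g.tf _ _ _ e k hi))
      ((hy _).resolve_left (fun k => g.tf _ _ _ e k hi'))
      ((hy' _).resolve_left (fun k => g.tf _ _ _ e' k hi))
      ((hy' _).resolve_left (fun k => g.tf _ _ _ e' k hi')) (br i)
  have f4 : ∀ x y z, R.Adj v x → R.Adj v y → R.Adj v z → (B.Adj x y ∨ R.Adj x y) →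
      (B.Adj x z ∨ R.Adj x z) → (B.Adj y z ∨ R.Adj y z) → B.Adj x y ∨ B.Adj x z ∨ B.Adj y z := by
    intro x y z vx vy vz xy xz yz
    by_contra hn
    push Not at hn
    exact g.r4 _ _ _ _ vx vy vz (xy.resolve_left hn.1) (xz.resolve_left hn.2.1)
      (yz.resolve_left hn.2.2)
  refine core_B (fun i => B.Adj (α i) a) (fun i => B.Adj (α i) (α (i + 1)))
    (fun i => B.Adj (α i) w') (fun i => B.Adj (α i) w) (B.Adj w' a) (B.Adj w' w)
    ?_ ?_ ?_ ?_ ?_ ?_ ?_ ?_ ?_ ?_ ?_ ?_ ?_ ?_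
  · exact fun i h => f12 _ _ (a1 i) (ab i) w1 b3 h
  · exact fun i h => f12 _ _ (a1 i) (ab i) (a1 _) (ab _) h
  · exact fun i => f4 _ _ _ (va i) (va _) v3 (aa i) (a3 _) (a3 _)
  · exact fun i hs h => f3 w' _ _ w1 b3 (ab i) (ab (i + 1)) (aa i) hs ⟨h.1.symm, h.2.symm⟩
  · exact fun i hs h => f3 _ _ _ (a1 i) (ab i) (ab (i + 1)) b3 (a3 _) hs h
  · exact fun i hs h => f3 _ _ _ (a1 (i + 1)) (ab _) (ab i) b3 (a3 _) hs ⟨h.1.symm, h.2⟩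
  · exact fun i => f4 _ _ _ (va i) v3 v2 (a3 i) (a2 i) w2
  · exact fun i hs h => f3 _ _ _ (a1 i) (ab i) b3 b2 w2 hs h
  · exact fun i hs h => f3 w' _ _ w1 b3 (ab i) b2 (a2 i) hs ⟨h.1.symm, h.2⟩
  · exact fun i => f4 _ _ _ (va i) (va _) v2 (aa i) (a2 _) (a2 _)
  · exact fun i h => g.tf _ _ _ h.1 h.2.2 h.2.1
  · exact fun i hs h => f3 _ _ _ (a1 i) (ab i) (ab (i + 1)) b2 (a2 _) hs h
  · exact fun i hs h => f3 _ _ _ (a1 (i + 1)) (ab _) (ab i) b2 (a2 _) hs ⟨h.1.symm, h.2⟩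
  · exact fun i h => g.tf _ _ _ h.1 h.2.2 h.2.1

end caseB

section main
variable {V : Type*} {B R : SimpleGraph V}

theorem exc_413 : ∀ t u w : Fin 4, tA t + tA u + tA w ≤ 3 →
    ¬ (tZ t + tZ u + tZ w = 0 ∧ 6 ≤ tB t + tB u + tB w) →
    ¬ (tZ t + tZ u + tZ w = 1 ∧ 3 ≤ tB t + tB u + tB w) →
    ¬ (tZ t + tZ u + tZ w = 2 ∧ 1 ≤ tB t + tB u + tB w) →
    ¬ (tZ t + tZ u + tZ w = 3) →
    ∃ a b c : Fin 3, (a ≠ b ∧ a ≠ c ∧ b ≠ c) ∧ ![t, u, w] a = 3 ∧ ![t, u, w] b = 0 ∧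
      (![t, u, w] c = 0 ∨ ![t, u, w] c = 1) := by
  decide +kernel

theorem HasType.zero {p q : Fin 5 → Prop} (h : HasType p q 0) : ∀ l, q l := by
  rcases h with ⟨_, h⟩ | ⟨h0, _⟩ | ⟨h0, _⟩ | ⟨h0, _⟩
  · exact h
  · exact absurd h0 (by decide)
  · exact absurd h0 (by decide)
  · exact absurd h0 (by decide)

theorem HasType.three {p q : Fin 5 → Prop} (h : HasType p q 3) : ∀ l, p l := by
  rcases h with ⟨h0, _⟩ | ⟨h0, _⟩ | ⟨h0, _⟩ | ⟨_, h⟩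
  · exact absurd h0 (by decide)
  · exact absurd h0 (by decide)
  · exact absurd h0 (by decide)
  · exact h

theorem HasType.one {p q : Fin 5 → Prop} (h : HasType p q 1) :
    ∃ l, p l ∧ ((q (l + 1) ∧ q (l + 2)) ∨ (q (l + 4) ∧ q (l + 3))) := by
  rcases h with ⟨h0, _⟩ | ⟨_, h⟩ | ⟨h0, _⟩ | ⟨h0, _⟩
  · exact absurd h0 (by decide)
  · exact h
  · exact absurd h0 (by decide)
  · exact absurd h0 (by decide)

theorem arr_4_1_3 (tf : ∀ x y z, B.Adj x y → B.Adj y z → B.Adj x z → False) :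
    Arr B R 4 1 3 := by
  intro S h
  obtain ⟨κ, γ, hc⟩ := h.exists_cfg
  by_contra hfree
  obtain ⟨sA, sB, τ, -, -, hcard, hτ, hA, hBfree, hB⟩ := step tf hc hfree 0
  simp only [Fin.sum_univ_three] at hA hB
  have a0 : sA.card = 0 := by omega
  have b0 : sB.card = 0 := by omega
  rw [a0, Nat.zero_add] at hA
  rw [b0, Nat.zero_add] at hB
  obtain ⟨a, b, c, ⟨nab, nac, nbc⟩, ha, hb, hcc⟩ := exc_413 (τ 0) (τ 1) (τ 2) hA
    (fun h => hBfree ((arr_3_6_0 tf).mono h.2 _ (by rw [h.1] at hB; exact hB)))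
    (fun h => hBfree ((arr_3_3_1 tf).mono h.2 _ (by rw [h.1] at hB; exact hB)))
    (fun h => hBfree ((Arr.up (arr_3_3_1 tf)).mono h.2 _ (by rw [h.1] at hB; exact hB)))
    (fun h => hBfree ((Arr.up ((Arr.up (arr_3_3_1 tf)).mono (by omega : 1 ≤ 2))).mono
      (Nat.zero_le _) _ (by rw [h] at hB; exact hB)))
  have e : ![τ 0, τ 1, τ 2] = τ := by
    funext i
    fin_cases i <;> rfl
  rw [e] at ha hb hcc
  have ta := hτ a
  have tb := hτ b
  have tc := hτ c
  rw [ha] at ta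
  rw [hb] at tb
  have Ha := ta.three
  have Hb := tb.zero
  let B' : SimpleGraph S := B.comap Subtype.val
  let R' : SimpleGraph S := R.comap Subtype.val
  have g : Good B' R' := ⟨fun x y z h1 h2 h3 => tf _ _ _ h1 h2 h3,
    fun x y z w h1 h2 h3 h4 h5 h6 => red4 hfree x.2 y.2 z.2 w.2 h1 h2 h3 h4 h5 h6⟩
  let v : S := ⟨κ 0, hc.kS 0⟩
  let δ : Fin 3 → Fin 5 → S := fun j l => ⟨γ j l, hc.cS j l⟩
  have cr : ∀ i j, i ≠ j → ∀ l l', B'.Adj (δ i l) (δ j l') ∨ R'.Adj (δ i l) (δ j l') :=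
    fun i j hij l l' => hc.cc i j hij l l'
  have cy : ∀ i l, B'.Adj (δ i l) (δ i (l + 1)) ∨ R'.Adj (δ i l) (δ i (l + 1)) :=
    fun i l => hc.c i l
  rcases hcc with h0 | h1
  · rw [h0] at tc
    have Hc := tc.zero
    exact caseA g (v := v) (α := δ a) (β := δ b) (γ := δ c) Ha Hb Hc (cy a) (cy b) (cy c)
      (cr a b nab) (cr a c nac) (cr b c nbc)
  · rw [h1] at tc
    obtain ⟨l, hl, ⟨hl1, hl2⟩ | ⟨hl1, hl2⟩⟩ := tc.one
    · have c1 := adj_symm' (cy c l)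
      have c2 := cy c (l + 1)
      rw [add_assoc] at c2
      exact caseB g (v := v) (a := δ c l) (w := δ c (l + 2)) (w' := δ c (l + 1)) (α := δ b)
        (β := δ a) Hb Ha hl hl2 hl1 (cy b) (cy a) (cr b a nab.symm)
        (fun i => cr b c nbc i _) (fun i => cr b c nbc i _) (fun i => cr b c nbc i _)
        (cr c a nac.symm _) (cr c a nac.symm _) (cr c a nac.symm _) c1 c2
    · have c1 := cy c (l + 4)
      have c2 := adj_symm' (cy c (l + 3))
      have e5 : l + 4 + 1 = l := by omega
      have e4 : l + 3 + 1 = l + 4 := by omega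
      rw [e5] at c1
      rw [e4] at c2
      exact caseB g (v := v) (a := δ c l) (w := δ c (l + 3)) (w' := δ c (l + 4)) (α := δ b)
        (β := δ a) Hb Ha hl hl2 hl1 (cy b) (cy a) (cr b a nab.symm)
        (fun i => cr b c nbc i _) (fun i => cr b c nbc i _) (fun i => cr b c nbc i _)
        (cr c a nac.symm _) (cr c a nac.symm _) (cr c a nac.symm _) c1 c2

/-- The six two-element subsets of a four-element set. -/
def row : Fin 6 → Fin 4 → Bool :=
  ![![true, true, false, false], ![true, false, true, false], ![true, false, false, true],
    ![false, true, true, false], ![false, true, false, true], ![false, false, true, true]]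

set_option synthInstance.maxSize 100000 in
set_option synthInstance.maxHeartbeats 1000000 in
theorem exc_544 : ∀ (a : Fin 4) (t : Fin 4 → Fin 4),
    a.val + (tA (t 0) + tA (t 1) + tA (t 2) + tA (t 3)) ≤ 4 →
    ¬ (tZ (t 0) + tZ (t 1) + tZ (t 2) + tZ (t 3) = 0 ∧
      9 ≤ 3 - a.val + (tB (t 0) + tB (t 1) + tB (t 2) + tB (t 3))) →
    ¬ (tZ (t 0) + tZ (t 1) + tZ (t 2) + tZ (t 3) = 1 ∧
      7 ≤ 3 - a.val + (tB (t 0) + tB (t 1) + tB (t 2) + tB (t 3))) →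
    ¬ (tZ (t 0) + tZ (t 1) + tZ (t 2) + tZ (t 3) = 2 ∧
      4 ≤ 3 - a.val + (tB (t 0) + tB (t 1) + tB (t 2) + tB (t 3))) →
    ¬ (tZ (t 0) + tZ (t 1) + tZ (t 2) + tZ (t 3) = 3 ∧
      1 ≤ 3 - a.val + (tB (t 0) + tB (t 1) + tB (t 2) + tB (t 3))) →
    ¬ (tZ (t 0) + tZ (t 1) + tZ (t 2) + tZ (t 3) = 4) →
    a = 0 ∧ ∃ c, ∀ j, t j = if row c j then 3 else 0 := by
  decide +kernel

theorem row_false : ∀ c, ∃ j j', j ≠ j' ∧ row c j = false ∧ row c j' = false := by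
  decide +kernel

theorem count_le_one : ∀ J : Fin 4 → Bool,
    (J 0).toNat + (J 1).toNat + (J 2).toNat + (J 3).toNat ≤ 1 →
    ∃ i1 i2 i3 i4 : Fin 4, (i1 ≠ i2 ∧ i1 ≠ i3 ∧ i1 ≠ i4 ∧ i2 ≠ i3 ∧ i2 ≠ i4 ∧ i3 ≠ i4) ∧
      J i1 = false ∧ J i2 = false ∧ J i3 = false := by
  decide +kernel

theorem core_544 : ∀ c : Fin 4 → Fin 6,
    (∀ i i', ∃ j, row (c i) j = row (c i') j) →
    (∀ j, 2 ≤ (row (c 0) j).toNat + (row (c 1) j).toNat + (row (c 2) j).toNat +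
      (row (c 3) j).toNat) → False := by
  decide +kernel

theorem red5 {S : Set V} (hfree : ¬ KC R S 5 0) {x y z w t : V} (hx : x ∈ S) (hy : y ∈ S)
    (hz : z ∈ S) (hw : w ∈ S) (ht : t ∈ S) (xy : R.Adj x y) (xz : R.Adj x z) (xw : R.Adj x w)
    (xt : R.Adj x t) (yz : R.Adj y z) (yw : R.Adj y w) (yt : R.Adj y t) (zw : R.Adj z w)
    (zt : R.Adj z t) (wt : R.Adj w t) : False :=
  hfree (KC.vert x hx (KC.vert y ⟨hy, xy⟩ (KC.vert z ⟨⟨hz, xz⟩, yz⟩ (KC.two (v := w) (w := t)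
    ⟨⟨⟨hw, xw⟩, yw⟩, zw⟩ ⟨⟨⟨ht, xt⟩, yt⟩, zt⟩ wt))))

theorem arr_5_4_4 (tf : ∀ x y z, B.Adj x y → B.Adj y z → B.Adj x z → False) :
    Arr B R 5 4 4 := by
  intro S h
  obtain ⟨κ, γ, hc⟩ := h.exists_cfg
  by_contra hfree
  have info : ∀ i, (∀ j, j ≠ i → R.Adj (κ i) (κ j)) ∧ ∃ c : Fin 6, ∀ j,
      (row c j = true → ∀ l, B.Adj (κ i) (γ j l)) ∧
      (row c j = false → ∀ l, R.Adj (κ i) (γ j l)) := by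
    intro i
    obtain ⟨sA, sB, τ, hsA, -, hcard, hτ, hA, hBfree, hB⟩ := step tf hc hfree i
    simp only [Fin.sum_univ_four] at hA hB
    have hb : sB.card = 3 - sA.card := by omega
    rw [hb] at hB
    obtain ⟨h0, c, hcv⟩ := exc_544 ⟨sA.card, by omega⟩ τ hA
      (fun h => hBfree ((arr_4_9_0 tf).mono h.2 _ (by rw [h.1] at hB; exact hB)))
      (fun h => hBfree ((Arr.up (arr_4_9_0 tf)).mono h.2 _ (by rw [h.1] at hB; exact hB)))
      (fun h => hBfree ((arr_4_4_2 tf).mono h.2 _ (by rw [h.1] at hB; exact hB)))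
      (fun h => hBfree ((arr_4_1_3 tf).mono h.2 _ (by rw [h.1] at hB; exact hB)))
      (fun h => hBfree ((Arr.up ((arr_4_1_3 tf).mono (by omega : 1 ≤ 2))).mono
        (Nat.zero_le _) _ (by rw [h] at hB; exact hB)))
    have hs : sA = ∅ := Finset.card_eq_zero.1 (by simpa [Fin.ext_iff] using h0)
    refine ⟨fun j hj => (hc.kk i j hj.symm).resolve_left (fun hb => ?_), c, fun j => ⟨?_, ?_⟩⟩
    · have := (hsA j).2 hb
      rw [hs] at this
      simp at this
    · intro hr
      have ht := hτ j
      rw [hcv j, hr] at ht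
      exact HasType.three ht
    · intro hr
      have ht := hτ j
      rw [hcv j, hr] at ht
      exact HasType.zero ht
  choose hK c hcol using info
  have hin : ∀ i j, row (c i) j = true → ∀ l, R.Adj (γ j l) (γ j (l + 1)) := fun i j h l =>
    (hc.c j l).resolve_left (fun e => tf _ _ _ ((hcol i j).1 h l) e ((hcol i j).1 h (l + 1)))
  have hcr : ∀ i j j', j ≠ j' → row (c i) j = true → row (c i) j' = true → ∀ l l',
      R.Adj (γ j l) (γ j' l') := fun i j j' hj h h' l l' =>
    (hc.cc j j' hj l l').resolve_left
      (fun e => tf _ _ _ ((hcol i j).1 h l) e ((hcol i j').1 h' l'))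
  refine core_544 c ?_ ?_
  · intro i i'
    by_contra hn
    push Not at hn
    obtain ⟨j, j', hj, h1, h2⟩ := row_false (c i)
    have h1' : row (c i') j = true := by
      have := hn j
      rw [h1] at this
      simpa using this.symm
    have h2' : row (c i') j' = true := by
      have := hn j'
      rw [h2] at this
      simpa using this.symm
    exact red5 hfree (hc.kS i) (hc.cS j 0) (hc.cS j (0 + 1)) (hc.cS j' 0) (hc.cS j' (0 + 1))
      ((hcol i j).2 h1 _) ((hcol i j).2 h1 _) ((hcol i j').2 h2 _) ((hcol i j').2 h2 _)
      (hin i' j h1' 0) (hcr i' j j' hj h1' h2' _ _) (hcr i' j j' hj h1' h2' _ _)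
      (hcr i' j j' hj h1' h2' _ _) (hcr i' j j' hj h1' h2' _ _) (hin i' j' h2' 0)
  · intro j
    by_contra hn
    obtain ⟨i1, i2, i3, i4, ⟨n12, n13, n14, n23, n24, n34⟩, h1, h2, h3⟩ :=
      count_le_one (fun i => row (c i) j) (by omega)
    have r1 := (hcol i1 j).2 h1
    have r2 := (hcol i2 j).2 h2
    have r3 := (hcol i3 j).2 h3
    by_cases h4 : row (c i4) j = true
    · exact red5 hfree (hc.kS i1) (hc.kS i2) (hc.kS i3) (hc.cS j 0) (hc.cS j (0 + 1))
        (hK _ _ n12.symm) (hK _ _ n13.symm) (r1 _) (r1 _) (hK _ _ n23.symm) (r2 _) (r2 _)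
        (r3 _) (r3 _) (hin i4 j h4 0)
    · have r4 := (hcol i4 j).2 (by simpa using h4)
      exact red5 hfree (hc.kS i1) (hc.kS i2) (hc.kS i3) (hc.kS i4) (hc.cS j 0)
        (hK _ _ n12.symm) (hK _ _ n13.symm) (hK _ _ n14.symm) (r1 _) (hK _ _ n23.symm)
        (hK _ _ n24.symm) (r2 _) (hK _ _ n34.symm) (r3 _) (r4 _)

end main

theorem hasMono {V : Type*} [DecidableEq V] {G : SimpleGraph V} {E : Set (Sym2 V)}
    (hE : E ⊆ G.edgeSet) {n : ℕ} (f : Fin n → V)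
    (hf : ∀ i j, i ≠ j → (fromEdgeSet E).Adj (f i) (f j)) : HasMonoNClique G E n := by
  have hinj : Function.Injective f := by
    intro i j hij
    by_contra hne
    exact (hf i j hne).ne hij
  have hadj : ∀ x ∈ Finset.univ.image f, ∀ y ∈ Finset.univ.image f, x ≠ y → s(x, y) ∈ E := by
    intro x hx y hy hxy
    obtain ⟨i, -, rfl⟩ := Finset.mem_image.1 hx
    obtain ⟨j, -, rfl⟩ := Finset.mem_image.1 hy
    exact ((fromEdgeSet_adj E).1 (hf i j (fun e => hxy (by rw [e])))).1
  refine ⟨Finset.univ.image f, ⟨?_, ?_⟩, hadj⟩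
  · intro x hx y hy hxy
    exact (mem_edgeSet G).1 (hE (hadj x hx y hy hxy))
  · rw [Finset.card_image_of_injective _ hinj]
    simp

/-- The four five-cycles of `G24`. -/
def cyc24 : Fin 4 → Fin 5 → V24 :=
  ![fun l => Sum.inr (Sum.inl l), fun l => Sum.inr (Sum.inr (Sum.inl l)),
    fun l => Sum.inr (Sum.inr (Sum.inr (Sum.inl l))),
    fun l => Sum.inr (Sum.inr (Sum.inr (Sum.inr l)))]

theorem cycle5_adj : ∀ l : Fin 5, (cycleGraph 5).Adj l (l + 1) := by
  decide

theorem cfg24 : Cfg G24 Set.univ (fun i : Fin 4 => (Sum.inl i : V24)) cyc24 where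
  kS _ := trivial
  cS _ _ := trivial
  kk i j h := h
  kc i j l := by fin_cases j <;> trivial
  cc i j h l l' := by
    fin_cases i <;> fin_cases j <;> trivial
  c j l := by
    fin_cases j <;> exact cycle5_adj l

theorem kc24 : KC G24 Set.univ 4 4 := by
  have := KC.build (T := Set.univ) cfg24 Finset.univ (fun _ _ => trivial) (fun _ => 0)
    (fun _ => 1) (fun j => KC.cyc (cyc24 j) (fun l => ⟨trivial, l, rfl⟩) (cfg24.c j) (KC.nil _))
  simpa using this

end FolkmanProof

open FolkmanProof in
/-- **Theorem 5.1.** `K₄ + C₅ + C₅ + C₅ + C₅ → (3,5)` : every blue-red coloring of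
its edges contains a blue 3-clique or a red 5-clique. -/
theorem K4_join_four_C5_arrows_3_5 : Arrows G24 3 5 := by
  rintro E1 E2 ⟨hU, -⟩ ⟨hb, hr⟩
  have s1 : E1 ⊆ G24.edgeSet := hU ▸ Set.subset_union_left
  have s2 : E2 ⊆ G24.edgeSet := hU ▸ Set.subset_union_right
  have tf : ∀ x y z, (fromEdgeSet E1).Adj x y → (fromEdgeSet E1).Adj y z →
      (fromEdgeSet E1).Adj x z → False := by
    intro x y z xy yz xz
    refine hb (hasMono s1 ![x, y, z] ?_)
    intro i j hij
    fin_cases i <;> fin_cases j <;>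
      first
        | exact absurd rfl hij
        | exact xy
        | exact yz
        | exact xz
        | exact xy.symm
        | exact yz.symm
        | exact xz.symm
  have hK : KC (fromEdgeSet E1 ⊔ fromEdgeSet E2) Set.univ 4 4 := by
    refine kc24.change ?_
    intro x _ y _ hxy
    have he : s(x, y) ∈ E1 ∪ E2 := by
      rw [hU]
      exact hxy
    rcases he with he | he
    · exact Or.inl ((fromEdgeSet_adj E1).2 ⟨he, hxy.ne⟩)
    · exact Or.inr ((fromEdgeSet_adj E2).2 ⟨he, hxy.ne⟩)
  obtain ⟨κ, γ, hc⟩ := (arr_5_4_4 tf Set.univ hK).exists_cfg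
  exact hr (hasMono s2 κ hc.kk)
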